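/- Suppose ℓ is in the limit-point case at both endpoints a and b. Then the operator S in L²(𝕋_κ; r dσ_κ), with domain consisting of all equivalence classes having a representative pair (u, u^[1]) ∈ D_ℓ² and acting by S[u] = [ℓu], is well defined (the class [ℓu] does not depend on the chosen representative pair), densely defined, and self-adjoint. -/

import Mathlib

open MeasureTheory Set Filter
open scoped ENNReal NNReal Classical

/-- Forward shift of a time scale. -/
noncomputable def tsSigma (T : Set ℝ) (t : ℝ) : ℝ :=
  if ({s | s ∈ T ∧ t < s}).Nonempty then sInf {s | s ∈ T ∧ t < s} else sSup T

/-- Backward shift of a time scale. -/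
noncomputable def tsRho (T : Set ℝ) (t : ℝ) : ℝ :=
  if ({s | s ∈ T ∧ s < t}).Nonempty then sSup {s | s ∈ T ∧ s < t} else sInf T

/-- `𝕋_κ` : the time scale with the left endpoint removed if it is finite and right-scattered. -/
noncomputable def tsKappa (T : Set ℝ) : Set ℝ :=
  if BddBelow T ∧ sInf T < tsSigma T (sInf T) then T \ {sInf T} else T

/-- Extension `p̄` of a function on `𝕋_κ` to all of `ℝ`. -/
noncomputable def extK (T : Set ℝ) (p : ℝ → ℂ) (t : ℝ) : ℂ :=
  if t ∈ tsKappa T then p t else p (tsSigma (tsKappa T) t)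

/-- Coercion of a real-valued coefficient to a complex-valued one. -/
def cR (f : ℝ → ℝ) : ℝ → ℂ := fun t => (f t : ℂ)

/-- `(u, u^[1])` is an integrated pair with density `h` against the measure `μ = dσ_κ`. -/
def IsPair (T : Set ℝ) (μ : Measure ℝ) (p : ℝ → ℂ) (u u1 h : ℝ → ℂ) : Prop :=
  ∀ c x : ℝ, c ≤ x →
    u x = u c + ∫ t in c..x, u1 t / extK T p t ∧
    u1 x = u1 c + ∫ t in Set.Ioc c x, h t ∂μ

/-- `(u, u^[1])` is a solution pair of `(ℓ - z) u = g`. -/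
def IsSLSol (T : Set ℝ) (μ : Measure ℝ) (p r q : ℝ → ℂ) (z : ℂ) (g : ℝ → ℂ)
    (u u1 : ℝ → ℂ) : Prop :=
  IsPair T μ p u u1 (fun t => (q t - z * r t) * u t - r t * g t)

/-- Wronskian of two pairs. -/
def Wr (u u1 v v1 : ℝ → ℂ) (x : ℝ) : ℂ := u x * v1 x - u1 x * v x

/-- The integrand `|u|² r` as an `ℝ≥0∞`-valued function. -/
noncomputable def sqWeight (r : ℝ → ℝ) (u : ℝ → ℂ) (t : ℝ) : ℝ≥0∞ :=
  ((‖u t‖₊ : ℝ≥0∞)) ^ 2 * ENNReal.ofReal (r t)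

/-- `u` lies in `L²` near the left endpoint `a`. -/
def L2NearLeft (T : Set ℝ) (μ : Measure ℝ) (r : ℝ → ℝ) (u : ℝ → ℂ) : Prop :=
  ∀ c ∈ tsKappa T, ∫⁻ t in {t | (∃ s ∈ T, s < t) ∧ t ≤ c} ∩ tsKappa T, sqWeight r u t ∂μ < ∞

/-- `u` lies in `L²` near the right endpoint `b`. -/
def L2NearRight (T : Set ℝ) (μ : Measure ℝ) (r : ℝ → ℝ) (u : ℝ → ℂ) : Prop :=
  ∀ c ∈ tsKappa T, ∫⁻ t in {t | c ≤ t ∧ ∃ s ∈ T, t < s} ∩ tsKappa T, sqWeight r u t ∂μ < ∞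

/-- `ℓ` is in the limit-circle case at the left endpoint. -/
def LimitCircleLeft (T : Set ℝ) (μ : Measure ℝ) (p r q : ℝ → ℝ) : Prop :=
  ∀ z : ℂ, ∀ u u1 : ℝ → ℂ, IsSLSol T μ (cR p) (cR r) (cR q) z 0 u u1 → L2NearLeft T μ r u

/-- `ℓ` is in the limit-point case at the left endpoint. -/
def LimitPointLeft (T : Set ℝ) (μ : Measure ℝ) (p r q : ℝ → ℝ) : Prop :=
  ∀ z : ℂ, ∃ u u1 : ℝ → ℂ, IsSLSol T μ (cR p) (cR r) (cR q) z 0 u u1 ∧ ¬ L2NearLeft T μ r u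

/-- `ℓ` is in the limit-circle case at the right endpoint. -/
def LimitCircleRight (T : Set ℝ) (μ : Measure ℝ) (p r q : ℝ → ℝ) : Prop :=
  ∀ z : ℂ, ∀ u u1 : ℝ → ℂ, IsSLSol T μ (cR p) (cR r) (cR q) z 0 u u1 → L2NearRight T μ r u

/-- `ℓ` is in the limit-point case at the right endpoint. -/
def LimitPointRight (T : Set ℝ) (μ : Measure ℝ) (p r q : ℝ → ℝ) : Prop :=
  ∀ z : ℂ, ∃ u u1 : ℝ → ℂ, IsSLSol T μ (cR p) (cR r) (cR q) z 0 u u1 ∧ ¬ L2NearRight T μ r u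

/-- The action `ℓ u = (-h + q u)/r` of the differential expression on a pair with density `h`. -/
noncomputable def ellApply (r q : ℝ → ℝ) (h u : ℝ → ℂ) (t : ℝ) : ℂ :=
  (-h t + (q t : ℂ) * u t) / (r t : ℂ)

/-- Membership in `L²(𝕋_κ; r dσ_κ)`. -/
def MemL2T (T : Set ℝ) (μ : Measure ℝ) (r : ℝ → ℝ) (u : ℝ → ℂ) : Prop :=
  ∫⁻ t in tsKappa T, sqWeight r u t ∂μ < ∞

/-- The pair `(u, u^[1])` with density `h` belongs to `D_ℓ²`. -/
def MemD2 (T : Set ℝ) (μ : Measure ℝ) (p r q : ℝ → ℝ) (u u1 h : ℝ → ℂ) : Prop :=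
  LocallyIntegrable h μ ∧ IsPair T μ (cR p) u u1 h ∧ MemL2T T μ r u ∧
    MemL2T T μ r (ellApply r q h u)

/-- The filter `x ↓ a`, `x ∈ 𝕋`. -/
noncomputable def leftLimFilter (T : Set ℝ) : Filter ℝ :=
  if BddBelow T then nhdsWithin (sInf T) T else Filter.atBot ⊓ Filter.principal T

/-- The filter `x ↑ b`, `x ∈ 𝕋`. -/
noncomputable def rightLimFilter (T : Set ℝ) : Filter ℝ :=
  if BddAbove T then nhdsWithin (sSup T) T else Filter.atTop ⊓ Filter.principal T

/-- The measure `r dσ_κ` on `𝕋_κ`, giving the Hilbert space `L²(𝕋_κ; r dσ_κ)`. -/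
noncomputable def wM (T : Set ℝ) (μ : Measure ℝ) (r : ℝ → ℝ) : Measure ℝ :=
  (μ.restrict (tsKappa T)).withDensity fun t => ENNReal.ofReal (r t)

/-!
The measure `dρ` is the push-forward of Lebesgue measure under the map sending `t` to the least
point of `𝕋` that is `≥ t`. Hence `1 / p̄` is locally integrable and `ℓ` becomes a Sturm–Liouville
expression on `ℝ` whose coefficients are measures. The limit-point hypotheses force `𝕋` to be
unbounded in both directions.

The maximal relation is the adjoint of the minimal one, so it is the graph of a self-adjoint
operator once it is single-valued and every square integrable solution `u` of `(ℓ - z) u = 0`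
vanishes for `z = ±i`. The energy `Im (u · conj u^[1]) / Im z` of `u` is an indefinite integral of
`|u|² r`, hence monotone. By the Plücker relation and the constancy of the Wronskian, the product
of the energies of `u` and of a second solution `v` is `|E(u, v)|²` minus a constant, where `E` is
the polarized energy and the increments of `E(u, v)` are controlled by Cauchy–Schwarz. If `v` is not
square integrable at an end, its energy is unbounded there, and this determines the sign of the
energy of `u`: nonpositive by the right end, nonnegative by the left one. So `u = 0`.
-/

/-! ### Self-adjoint linear relations -/

section LinearRelations

variable {𝕜 E F : Type*} [RCLike 𝕜] [NormedAddCommGroup E] [InnerProductSpace 𝕜 E]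
  [NormedAddCommGroup F] [InnerProductSpace 𝕜 F]

theorem mem_adjoint_iff_inner_eq {Γ : Submodule 𝕜 (E × F)} {x : F} {y : E} :
    (x, y) ∈ Γ.adjoint ↔ ∀ a b, (a, b) ∈ Γ → inner 𝕜 b x = inner 𝕜 a y := by
  simp only [Submodule.mem_adjoint_iff, sub_eq_zero]

theorem adjoint_le_adjoint {Γ Δ : Submodule 𝕜 (E × F)} (h : Γ ≤ Δ) : Δ.adjoint ≤ Γ.adjoint :=
  fun _ hx => mem_adjoint_iff_inner_eq.2 fun a b hab => mem_adjoint_iff_inner_eq.1 hx a b (h hab)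

theorem le_adjoint_adjoint (Γ : Submodule 𝕜 (E × F)) : Γ ≤ Γ.adjoint.adjoint := by
  rintro ⟨a, b⟩ hab
  refine mem_adjoint_iff_inner_eq.2 fun x y hxy => ?_
  rw [← inner_conj_symm, ← mem_adjoint_iff_inner_eq.1 hxy a b hab, inner_conj_symm]

theorem isClosed_adjoint (Γ : Submodule 𝕜 (E × F)) : IsClosed (Γ.adjoint : Set (F × E)) := by
  have : (Γ.adjoint : Set (F × E)) =
      ⋂ x : Γ, {y : F × E | inner 𝕜 x.1.2 y.1 = inner 𝕜 x.1.1 y.2} := by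
    ext ⟨x, y⟩
    simp only [SetLike.mem_coe, mem_adjoint_iff_inner_eq, mem_iInter, mem_ofPred_eq,
      Subtype.forall, Prod.forall]
  rw [this]
  exact isClosed_iInter fun x => isClosed_eq (by fun_prop) (by fun_prop)

end LinearRelations

section SelfAdjointRelations

open Complex (I)

variable {E : Type*} [NormedAddCommGroup E] [InnerProductSpace ℂ E]

theorem norm_sub_I_smul_sq_of_mem_symmetric {A : Submodule ℂ (E × E)} (hA : A ≤ A.adjoint)
    {f g : E} (h : (f, g) ∈ A) : ‖g - I • f‖ ^ 2 = ‖g‖ ^ 2 + ‖f‖ ^ 2 := by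
  have him : (inner ℂ g f : ℂ).im = 0 := by
    rw [← Complex.conj_eq_iff_im, inner_conj_symm, mem_adjoint_iff_inner_eq.1 (hA h) f g h]
  rw [@norm_sub_sq ℂ]
  simp [inner_smul_right, him, norm_smul]

variable [CompleteSpace E]

theorem exists_sub_I_smul_eq {A : Submodule ℂ (E × E)} (hA : A ≤ A.adjoint)
    (hcl : IsClosed (A : Set (E × E))) (hker : ∀ f, (f, (-I) • f) ∈ A.adjoint → f = 0) (k : E) :
    ∃ f g, (f, g) ∈ A ∧ g - I • f = k := by
  let L : A →L[ℂ] E :=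
    (ContinuousLinearMap.snd ℂ E E - I • ContinuousLinearMap.fst ℂ E E).comp A.subtypeL
  have hanti : AntilipschitzWith 1 L := by
    refine AddMonoidHomClass.antilipschitz_of_bound L ?_
    rintro ⟨⟨f, g⟩, h⟩
    have hnorm := norm_sub_I_smul_sq_of_mem_symmetric hA h
    change max ‖f‖ ‖g‖ ≤ (1 : ℝ≥0) * ‖g - I • f‖
    rw [NNReal.coe_one, one_mul, max_le_iff]
    constructor <;> refine (sq_le_sq₀ (norm_nonneg _) (norm_nonneg _)).1 ?_ <;>
      nlinarith [sq_nonneg ‖f‖, sq_nonneg ‖g‖]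
  have : CompleteSpace A := hcl.completeSpace_coe
  have : CompleteSpace (LinearMap.range L.toLinearMap) :=
    (hanti.isClosed_range L.uniformContinuous).completeSpace_coe
  have hrange : LinearMap.range L.toLinearMap = ⊤ := by
    rw [← Submodule.orthogonal_eq_bot_iff, Submodule.eq_bot_iff]
    refine fun x hx => hker x (mem_adjoint_iff_inner_eq.2 fun f g hfg => ?_)
    have horth := (Submodule.mem_orthogonal _ _).1 hx (g - I • f) ⟨⟨(f, g), hfg⟩, rfl⟩
    rw [inner_sub_left, inner_smul_left, sub_eq_zero] at horth
    simpa [inner_smul_right] using horth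
  obtain ⟨⟨⟨f, g⟩, hfg⟩, h⟩ : k ∈ LinearMap.range L.toLinearMap := hrange ▸ Submodule.mem_top
  exact ⟨f, g, hfg, h⟩

theorem adjoint_eq_self_of_symmetric {A : Submodule ℂ (E × E)} (hA : A ≤ A.adjoint)
    (hcl : IsClosed (A : Set (E × E))) (hker : ∀ f, (f, I • f) ∈ A.adjoint → f = 0)
    (hker' : ∀ f, (f, (-I) • f) ∈ A.adjoint → f = 0) : A.adjoint = A := by
  refine le_antisymm ?_ hA
  rintro ⟨x, y⟩ hxy
  obtain ⟨f, g, hfg, hk⟩ := exists_sub_I_smul_eq hA hcl hker' (y - I • x)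
  have hsub : (x - f, y - g) ∈ A.adjoint := A.adjoint.sub_mem hxy (hA hfg)
  have hyg : y - g = I • (x - f) := by
    rw [smul_sub, sub_eq_sub_iff_sub_eq_sub, hk]
  have hxf : x - f = 0 := hker _ (hyg ▸ hsub)
  rw [hxf, smul_zero] at hyg
  rwa [sub_eq_zero.1 hxf, sub_eq_zero.1 hyg]

theorem exists_isSelfAdjoint_graph_eq {Γ : Submodule ℂ (E × E)} (hΓ : Γ.adjoint = Γ)
    (hsv : ∀ y, (0, y) ∈ Γ → y = 0) :
    ∃ S : E →ₗ.[ℂ] E, Dense (S.domain : Set E) ∧ IsSelfAdjoint S ∧ S.graph = Γ := by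
  have hgraph : Γ.toLinearPMap.graph = Γ := by
    refine Submodule.toLinearPMap_graph_eq _ ?_
    rintro ⟨x, y⟩ hxy rfl
    exact hsv y hxy
  have hdense : Dense (Γ.toLinearPMap.domain : Set E) := by
    rw [Submodule.dense_iff_topologicalClosure_eq_top, Submodule.topologicalClosure_eq_top_iff,
      Submodule.eq_bot_iff]
    refine fun k hk => hsv k (hΓ ▸ mem_adjoint_iff_inner_eq.2 fun f g hfg => ?_)
    have hf : f ∈ Γ.toLinearPMap.domain := LinearPMap.mem_domain_iff.2 ⟨g, hgraph.symm ▸ hfg⟩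
    rw [inner_zero_right, (Submodule.mem_orthogonal _ _).1 hk f hf]
  refine ⟨Γ.toLinearPMap, hdense, ?_, hgraph⟩
  rw [LinearPMap.isSelfAdjoint_def]
  refine LinearPMap.eq_of_eq_graph ?_
  rw [LinearPMap.adjoint_graph_eq_graph_adjoint hdense, hgraph, hΓ]

theorem exists_isSelfAdjoint_graph_eq_adjoint {Γ₀ : Submodule ℂ (E × E)}
    (hsymm : Γ₀ ≤ Γ₀.adjoint) (hsv : ∀ y, (0, y) ∈ Γ₀.adjoint → y = 0)
    (hker : ∀ f, (f, I • f) ∈ Γ₀.adjoint → f = 0)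
    (hker' : ∀ f, (f, (-I) • f) ∈ Γ₀.adjoint → f = 0) :
    ∃ S : E →ₗ.[ℂ] E, Dense (S.domain : Set E) ∧ IsSelfAdjoint S ∧ S.graph = Γ₀.adjoint := by
  have hle : Γ₀ ≤ Γ₀.adjoint.adjoint := le_adjoint_adjoint Γ₀
  have hbi : Γ₀.adjoint.adjoint.adjoint = Γ₀.adjoint :=
    le_antisymm (adjoint_le_adjoint hle) (le_adjoint_adjoint _)
  have hself : Γ₀.adjoint.adjoint = Γ₀.adjoint :=
    (hbi.symm.trans (adjoint_eq_self_of_symmetric (A := Γ₀.adjoint.adjoint)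
      (hbi.symm ▸ adjoint_le_adjoint hsymm) (isClosed_adjoint _) (hbi.symm ▸ hker)
      (hbi.symm ▸ hker'))).symm
  exact exists_isSelfAdjoint_graph_eq hself hsv

end SelfAdjointRelations

/-! ### Indefinite integrals against a measure -/

section LocallyIntegrable

variable {μ : Measure ℝ} {E : Type*} [NormedAddCommGroup E] {f : ℝ → E}

theorem integrableOn_Ioc_of_locallyIntegrable (hf : LocallyIntegrable f μ) (a b : ℝ) :
    IntegrableOn f (Ioc a b) μ :=
  (hf.integrableOn_isCompact isCompact_Icc).mono_set Ioc_subset_Icc_self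

theorem intervalIntegrable_of_locallyIntegrable (hf : LocallyIntegrable f μ) (a b : ℝ) :
    IntervalIntegrable f μ a b :=
  ⟨integrableOn_Ioc_of_locallyIntegrable hf a b, integrableOn_Ioc_of_locallyIntegrable hf b a⟩

theorem locallyIntegrable_of_integrableOn_Icc (h : ∀ a b : ℝ, IntegrableOn f (Icc a b) μ) :
    LocallyIntegrable f μ := fun x =>
  ⟨Icc (x - 1) (x + 1), Icc_mem_nhds (sub_one_lt x) (lt_add_one x), h _ _⟩

theorem locallyIntegrable_norm (hf : LocallyIntegrable f μ) : LocallyIntegrable (‖f ·‖) μ :=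
  hf.mono hf.aestronglyMeasurable.norm (ae_of_all _ fun _ => (norm_norm _).le)

theorem locallyIntegrable_ofReal {f : ℝ → ℝ} (hf : LocallyIntegrable f μ) :
    LocallyIntegrable (fun t => (f t : ℂ)) μ :=
  hf.mono (Complex.continuous_ofReal.comp_aestronglyMeasurable hf.aestronglyMeasurable)
    (ae_of_all _ fun _ => (Complex.norm_real _).le)

theorem locallyIntegrable_conj {𝕜 : Type*} [RCLike 𝕜] {f : ℝ → 𝕜} (hf : LocallyIntegrable f μ) :
    LocallyIntegrable (fun t => starRingEnd 𝕜 (f t)) μ :=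
  hf.mono (RCLike.continuous_conj.comp_aestronglyMeasurable hf.aestronglyMeasurable)
    (ae_of_all _ fun _ => (RCLike.norm_conj _).le)

theorem locallyIntegrable_mul_of_bounded_left {𝕜 : Type*} [RCLike 𝕜] {f g : ℝ → 𝕜}
    (hf : AEStronglyMeasurable f μ) (hb : ∀ a b : ℝ, ∃ C : ℝ, ∀ x ∈ Icc a b, ‖f x‖ ≤ C)
    (hg : LocallyIntegrable g μ) : LocallyIntegrable (fun t => f t * g t) μ := by
  refine locallyIntegrable_of_integrableOn_Icc fun a b => ?_
  obtain ⟨C, hC⟩ := hb a b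
  exact (hg.integrableOn_isCompact isCompact_Icc).bdd_mul (c := C) hf.restrict
    ((ae_restrict_iff' measurableSet_Icc).2 (ae_of_all _ hC))

theorem stronglyMeasurable_of_continuousWithinAt_Ici {X : Type*} [TopologicalSpace X]
    [TopologicalSpace.PseudoMetrizableSpace X] {F : ℝ → X}
    (hF : ∀ x, ContinuousWithinAt F (Ici x) x) : StronglyMeasurable F := by
  let d : ℕ → ℝ → ℝ := fun n x => ⌈x * (n + 1)⌉ / (n + 1)
  have hle : ∀ n x, x ≤ d n x := fun n x => (le_div_iff₀ (by positivity)).2 (Int.le_ceil _)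
  have hge : ∀ n x, d n x ≤ x + 1 / ((n : ℝ) + 1) := fun n x => by
    rw [div_le_iff₀ (by positivity), add_mul, one_div_mul_cancel (by positivity)]
    exact (Int.ceil_lt_add_one _).le
  have hd : ∀ x, Tendsto (d · x) atTop (nhdsWithin x (Ici x)) := fun x => by
    refine tendsto_nhdsWithin_iff.2 ⟨?_, Eventually.of_forall fun n => hle n x⟩
    refine tendsto_of_tendsto_of_tendsto_of_le_of_le tendsto_const_nhds ?_ (hle · x) (hge · x)
    simpa using tendsto_one_div_add_atTop_nhds_zero_nat.const_add x
  refine stronglyMeasurable_of_tendsto atTop (f := fun n x => F (d n x)) (fun n => ?_)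
    (tendsto_pi_nhds.2 fun x => (hF x).tendsto.comp (hd x))
  exact (StronglyMeasurable.of_discrete (f := fun k : ℤ => F (k / ((n : ℝ) + 1)))).comp_measurable
    (measurable_id.mul_const _).ceil

end LocallyIntegrable

/-- `F` is an indefinite integral of the locally integrable function `f` with respect to `μ`, i.e.
`dF = f dμ`. As interval integrals run over `(c, x]`, `F` is normalized to be right-continuous. -/
structure IsIndefiniteIntegral {E : Type*} [NormedAddCommGroup E] [NormedSpace ℝ E]
    (μ : Measure ℝ) (f F : ℝ → E) : Prop where
  locallyIntegrable : LocallyIntegrable f μ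
  sub_eq : ∀ c x, F x - F c = ∫ t in c..x, f t ∂μ

namespace IsIndefiniteIntegral

section NormedSpace

variable {E : Type*} [NormedAddCommGroup E] [NormedSpace ℝ E] {μ : Measure ℝ} {f g F G : ℝ → E}

theorem of_eq_add (hf : LocallyIntegrable f μ) {c : ℝ}
    (h : ∀ x, F x = F c + ∫ t in c..x, f t ∂μ) : IsIndefiniteIntegral μ f F where
  locallyIntegrable := hf
  sub_eq a x := by
    rw [h x, h a, add_sub_add_left_eq_sub, intervalIntegral.integral_interval_sub_left] <;>
      exact intervalIntegrable_of_locallyIntegrable hf _ _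

theorem eq_add (hF : IsIndefiniteIntegral μ f F) (c x : ℝ) :
    F x = F c + ∫ t in c..x, f t ∂μ := by
  rw [← hF.sub_eq, add_sub_cancel]

theorem add (hF : IsIndefiniteIntegral μ f F) (hG : IsIndefiniteIntegral μ g G) :
    IsIndefiniteIntegral μ (fun t => f t + g t) (fun x => F x + G x) where
  locallyIntegrable := hF.locallyIntegrable.add hG.locallyIntegrable
  sub_eq c x := by
    rw [intervalIntegral.integral_add
      (intervalIntegrable_of_locallyIntegrable hF.locallyIntegrable _ _)
      (intervalIntegrable_of_locallyIntegrable hG.locallyIntegrable _ _), ← hF.sub_eq, ← hG.sub_eq,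
      add_sub_add_comm]

theorem congr_ae (hF : IsIndefiniteIntegral μ f F) (h : f =ᵐ[μ] g) :
    IsIndefiniteIntegral μ g F where
  locallyIntegrable := hF.locallyIntegrable.congr h
  sub_eq c x := by
    rw [hF.sub_eq, intervalIntegral.integral_congr_ae (h.mono fun x hx _ => hx)]

theorem continuousWithinAt_Ici (hF : IsIndefiniteIntegral μ f F) (x : ℝ) :
    ContinuousWithinAt F (Ici x) x := by
  have hi : IntegrableOn f (Ioi x) (μ.restrict (Iic (x + 1))) := by
    rw [IntegrableOn, Measure.restrict_restrict measurableSet_Ioi, Ioi_inter_Iic]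
    exact integrableOn_Ioc_of_locallyIntegrable hF.locallyIntegrable _ _
  have hcont : ContinuousWithinAt
      (fun y => F (x + 1) - ∫ t in Ioi y, f t ∂μ.restrict (Iic (x + 1))) (Ici x) x :=
    hi.continuousWithinAt_Ici_primitive_Ioi.const_sub _
  refine hcont.congr_of_eventuallyEq ?_ ?_
  · filter_upwards [Ico_mem_nhdsGE (lt_add_one x)] with y hy
    rw [Measure.restrict_restrict measurableSet_Ioi, Ioi_inter_Iic,
      ← intervalIntegral.integral_of_le hy.2.le, ← hF.sub_eq, sub_sub_cancel]
  · rw [Measure.restrict_restrict measurableSet_Ioi, Ioi_inter_Iic,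
      ← intervalIntegral.integral_of_le (lt_add_one x).le, ← hF.sub_eq, sub_sub_cancel]

theorem stronglyMeasurable (hF : IsIndefiniteIntegral μ f F) : StronglyMeasurable F :=
  stronglyMeasurable_of_continuousWithinAt_Ici hF.continuousWithinAt_Ici

theorem exists_norm_le (hF : IsIndefiniteIntegral μ f F) (a b : ℝ) :
    ∃ C : ℝ, ∀ x ∈ Icc a b, ‖F x‖ ≤ C := by
  refine ⟨‖F a‖ + ∫ s in Ioc a b, ‖f s‖ ∂μ, fun x hx => ?_⟩
  rw [hF.eq_add a x, intervalIntegral.integral_of_le hx.1]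
  refine (norm_add_le _ _).trans (add_le_add_right ((norm_integral_le_integral_norm _).trans ?_) _)
  exact setIntegral_mono_set (integrableOn_Ioc_of_locallyIntegrable hF.locallyIntegrable a b).norm
    (ae_of_all _ fun _ => norm_nonneg _) (Ioc_subset_Ioc_right hx.2).eventuallyLE

theorem continuous [NullSingletonClass μ] (hF : IsIndefiniteIntegral μ f F) : Continuous F := by
  rw [funext (hF.eq_add 0)]
  exact continuous_const.add (intervalIntegral.continuous_primitive
    (intervalIntegrable_of_locallyIntegrable hF.locallyIntegrable) 0)

end NormedSpace

section RCLike

variable {𝕜 : Type*} [RCLike 𝕜] {μ ν : Measure ℝ} {f g F : ℝ → 𝕜}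

theorem const_mul (hF : IsIndefiniteIntegral μ f F) (a : 𝕜) :
    IsIndefiniteIntegral μ (fun t => a * f t) (fun x => a * F x) where
  locallyIntegrable := hF.locallyIntegrable.smul a
  sub_eq c x := by rw [← mul_sub, hF.sub_eq, intervalIntegral.integral_const_mul]

theorem locallyIntegrable_mul (hF : IsIndefiniteIntegral μ f F) (hg : LocallyIntegrable g ν) :
    LocallyIntegrable (fun t => F t * g t) ν :=
  locallyIntegrable_mul_of_bounded_left hF.stronglyMeasurable.aestronglyMeasurable
    hF.exists_norm_le hg

end RCLike

end IsIndefiniteIntegral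

theorem integral_Ioc_mul_integral_Ioc {𝕜 : Type*} [RCLike 𝕜] {μ ν : Measure ℝ}
    [IsLocallyFiniteMeasure μ] [IsLocallyFiniteMeasure ν] {f g : ℝ → 𝕜}
    (hf : LocallyIntegrable f μ) (hg : LocallyIntegrable g ν) (c x : ℝ) :
    (∫ s in Ioc c x, f s ∂μ) * ∫ t in Ioc c x, g t ∂ν =
      (∫ s in Ioc c x, f s * ∫ t in Ioc c s, g t ∂ν ∂μ) +
        ∫ t in Ioc c x, (∫ s in Ioo c t, f s ∂μ) * g t ∂ν := by
  have hint : Integrable (fun z : ℝ × ℝ => f z.1 * g z.2)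
      ((μ.restrict (Ioc c x)).prod (ν.restrict (Ioc c x))) :=
    Integrable.mul_prod (integrableOn_Ioc_of_locallyIntegrable hf c x)
      (integrableOn_Ioc_of_locallyIntegrable hg c x)
  have hD : MeasurableSet {z : ℝ × ℝ | z.2 ≤ z.1} :=
    measurableSet_le measurable_snd measurable_fst
  rw [← integral_prod_mul, ← integral_add_compl hD hint, ← integral_indicator hD,
    ← integral_indicator hD.compl, integral_prod _ (hint.indicator hD),
    integral_prod_symm _ (hint.indicator hD.compl)]
  congr 1
  · refine setIntegral_congr_fun measurableSet_Ioc fun s hs => ?_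
    have hsub : Ioc c s = Ioc c x ∩ Iic s := by
      rw [Ioc_inter_Iic, min_eq_right hs.2]
    simp only [hsub, ← integral_const_mul, ← setIntegral_indicator measurableSet_Iic]
    refine integral_congr_ae (ae_of_all _ fun t => ?_)
    simp only [indicator, mem_ofPred_eq, mem_Iic, mul_ite, mul_zero]
  · refine setIntegral_congr_fun measurableSet_Ioc fun t ht => ?_
    have hsub : Ioo c t = Ioc c x ∩ Iio t :=
      Set.ext fun s => ⟨fun h => ⟨⟨h.1, h.2.le.trans ht.2⟩, h.2⟩, fun h => ⟨h.1.1, h.2⟩⟩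
    simp only [hsub, ← integral_mul_const, ← setIntegral_indicator measurableSet_Iio]
    refine integral_congr_ae (ae_of_all _ fun s => ?_)
    simp only [indicator, mem_compl_iff, mem_ofPred_eq, not_le, mem_Iio, ite_mul, zero_mul]

namespace IsIndefiniteIntegral

section IntegrationByParts

variable {𝕜 : Type*} [RCLike 𝕜] {μ ν : Measure ℝ} [IsLocallyFiniteMeasure μ]
  [IsLocallyFiniteMeasure ν] [NullSingletonClass μ] {f g F G : ℝ → 𝕜}

theorem mul_sub_mul (hF : IsIndefiniteIntegral μ f F) (hG : IsIndefiniteIntegral ν g G)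
    (c x : ℝ) :
    F x * G x - F c * G c = (∫ t in c..x, G t * f t ∂μ) + ∫ t in c..x, F t * g t ∂ν := by
  wlog hcx : c ≤ x generalizing c x
  · rw [intervalIntegral.integral_symm x c, intervalIntegral.integral_symm x c, ← neg_add,
      ← this x c (le_of_not_ge hcx), neg_sub]
  have hGf : ∫ t in c..x, G t * f t ∂μ =
      (∫ s in Ioc c x, f s * ∫ t in Ioc c s, g t ∂ν ∂μ) + G c * (F x - F c) := by
    have hinc : ∀ s ∈ Ioc c x, f s * ∫ t in Ioc c s, g t ∂ν = G s * f s - G c * f s :=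
      fun s hs => by rw [← intervalIntegral.integral_of_le hs.1.le, ← hG.sub_eq]; ring
    rw [setIntegral_congr_fun measurableSet_Ioc hinc, ← intervalIntegral.integral_of_le hcx,
      intervalIntegral.integral_sub, intervalIntegral.integral_const_mul, ← hF.sub_eq,
      sub_add_cancel]
    · exact intervalIntegrable_of_locallyIntegrable
        (hG.locallyIntegrable_mul hF.locallyIntegrable) c x
    · exact (intervalIntegrable_of_locallyIntegrable hF.locallyIntegrable c x).const_mul _
  have hFg : ∫ t in c..x, F t * g t ∂ν =
      (∫ t in Ioc c x, (∫ s in Ioo c t, f s ∂μ) * g t ∂ν) + F c * (G x - G c) := by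
    have hinc : ∀ t ∈ Ioc c x, (∫ s in Ioo c t, f s ∂μ) * g t = F t * g t - F c * g t :=
      fun t ht => by
        rw [← integral_Ioc_eq_integral_Ioo, ← intervalIntegral.integral_of_le ht.1.le, ← hF.sub_eq,
          sub_mul]
    rw [setIntegral_congr_fun measurableSet_Ioc hinc, ← intervalIntegral.integral_of_le hcx,
      intervalIntegral.integral_sub, intervalIntegral.integral_const_mul, ← hG.sub_eq,
      sub_add_cancel]
    · exact intervalIntegrable_of_locallyIntegrable
        (hF.locallyIntegrable_mul hG.locallyIntegrable) c x
    · exact (intervalIntegrable_of_locallyIntegrable hG.locallyIntegrable c x).const_mul _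
  have hprod := integral_Ioc_mul_integral_Ioc hF.locallyIntegrable hG.locallyIntegrable c x
  rw [← intervalIntegral.integral_of_le hcx, ← intervalIntegral.integral_of_le hcx, ← hF.sub_eq,
    ← hG.sub_eq] at hprod
  rw [hGf, hFg]
  linear_combination hprod

theorem pow_succ (hF : IsIndefiniteIntegral μ f F) (n : ℕ) :
    IsIndefiniteIntegral μ (fun t => (n + 1) * (F t ^ n * f t)) (fun x => F x ^ (n + 1)) := by
  induction n with
  | zero => simpa only [CharP.cast_eq_zero, zero_add, pow_zero, one_mul, pow_one] using hF
  | succ n ih =>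
    have hl : LocallyIntegrable (fun t => (↑(n + 1) + 1) * (F t ^ (n + 1) * f t)) μ :=
      ((ih.locallyIntegrable_mul hF.locallyIntegrable)).smul (↑(n + 1) + 1 : 𝕜)
    refine ⟨hl, fun c x => ?_⟩
    rw [pow_succ' (F x), pow_succ' (F c), hF.mul_sub_mul ih, ← intervalIntegral.integral_add]
    · refine intervalIntegral.integral_congr fun t _ => ?_
      push_cast
      ring
    · exact intervalIntegrable_of_locallyIntegrable
        (ih.locallyIntegrable_mul hF.locallyIntegrable) c x
    · exact intervalIntegrable_of_locallyIntegrable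
        (hF.locallyIntegrable_mul ih.locallyIntegrable) c x

end IntegrationByParts

theorem integral_abs_pow_mul {ω Ω : ℝ → ℝ} (hΩ : IsIndefiniteIntegral volume ω Ω)
    (hω : ∀ t, 0 ≤ ω t) {c : ℝ} (hc : Ω c = 0) (n : ℕ) (x : ℝ) :
    |∫ t in c..x, |Ω t| ^ n * ω t| = |Ω x| ^ (n + 1) / (n + 1) := by
  have hpow : (n + 1) * ∫ t in c..x, Ω t ^ n * ω t = Ω x ^ (n + 1) := by
    rw [← intervalIntegral.integral_const_mul, ← (hΩ.pow_succ n).sub_eq, hc]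
    ring
  have hmono : Monotone Ω := fun a b hab =>
    sub_nonneg.1 (hΩ.sub_eq a b ▸ intervalIntegral.integral_nonneg hab fun t _ => hω t)
  obtain ⟨ε, hε, hsign⟩ : ∃ ε : ℝ, |ε| = 1 ∧ ∀ t ∈ uIcc c x, |Ω t| = ε * Ω t := by
    rcases le_total c x with hcx | hcx
    · refine ⟨1, abs_one, fun t ht => ?_⟩
      rw [uIcc_of_le hcx] at ht
      rw [one_mul, abs_of_nonneg (hc ▸ hmono ht.1)]
    · refine ⟨-1, by rw [abs_neg, abs_one], fun t ht => ?_⟩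
      rw [uIcc_of_ge hcx] at ht
      rw [neg_one_mul, abs_of_nonpos (hc ▸ hmono ht.2)]
  have hint : ∫ t in c..x, |Ω t| ^ n * ω t = ε ^ n * ∫ t in c..x, Ω t ^ n * ω t := by
    rw [← intervalIntegral.integral_const_mul]
    refine intervalIntegral.integral_congr fun t ht => ?_
    simp only [hsign t ht, mul_pow, mul_assoc]
  rw [hint, abs_mul, abs_pow, hε, one_pow, one_mul, ← abs_pow, ← hpow, abs_mul,
    abs_of_nonneg (by positivity : (0 : ℝ) ≤ n + 1), mul_div_cancel_left₀ _ (by positivity)]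

end IsIndefiniteIntegral

theorem ae_of_forall_ae_restrict_Ioc {μ : Measure ℝ} {P : ℝ → Prop}
    (h : ∀ n : ℕ, ∀ᵐ t ∂μ.restrict (Ioc (-n) n), P t) : ∀ᵐ t ∂μ, P t := by
  have hcover : ⋃ n : ℕ, Ioc (-n : ℝ) n = univ := iUnion_eq_univ_iff.2 fun x => by
    obtain ⟨n, hn⟩ := exists_nat_gt |x|
    exact ⟨n, (abs_lt.1 hn).1, (abs_lt.1 hn).2.le⟩
  rw [← Measure.restrict_univ (μ := μ), ← hcover]
  exact (ae_restrict_iUnion_iff _ _).2 h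

namespace IsIndefiniteIntegral

section NormedSpace

variable {E : Type*} [NormedAddCommGroup E] [NormedSpace ℝ E]
  {μ : Measure ℝ} {f F : ℝ → E}

theorem ae_restrict_eq_zero [CompleteSpace E] (hF : IsIndefiniteIntegral μ f F)
    {a b : ℝ} (hconst : ∀ x ∈ Icc a b, F x = F a) : ∀ᵐ t ∂μ.restrict (Ioc a b), f t = 0 := by
  have hi : IntegrableOn f (Ioc a b) μ := integrableOn_Ioc_of_locallyIntegrable
    hF.locallyIntegrable a b
  have hzero (c d) (hac : a ≤ c) (hcd : c ≤ d) (hdb : d ≤ b) : ∫ t in Ioc c d, f t ∂μ = 0 := by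
    rw [← intervalIntegral.integral_of_le hcd, ← hF.sub_eq, hconst c ⟨hac, hcd.trans hdb⟩,
      hconst d ⟨hac.trans hcd, hdb⟩, sub_self]
  rcases lt_or_ge b a with hba | hab
  · rw [Ioc_eq_empty_of_le hba.le, Measure.restrict_empty, ae_zero]
    exact eventually_bot
  refine hi.ae_eq_zero_of_forall_setIntegral_eq_zero fun S hS hfin => ?_
  clear hfin
  induction S, hS using MeasurableSpace.induction_on_inter
      (BorelSpace.measurable_eq.trans (borel_eq_generateFrom_Ioc ℝ)) (isPiSystem_Ioc id id) with
  | empty => exact setIntegral_empty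
  | basic S hS =>
    obtain ⟨c, d, -, rfl⟩ := hS
    simp only [Measure.restrict_restrict measurableSet_Ioc, Ioc_inter_Ioc]
    rcases le_total (c ⊔ a) (d ⊓ b) with hle | hle
    · exact hzero _ _ le_sup_right hle inf_le_right
    · rw [Ioc_eq_empty_of_le hle, setIntegral_empty]
  | compl S hS ih =>
    rw [setIntegral_compl hS hi, ih, hzero a b le_rfl hab le_rfl, sub_zero]
  | iUnion S hd hm ih =>
    rw [integral_iUnion hm hd hi.integrableOn, tsum_congr ih, tsum_zero]

theorem ae_eq_zero [CompleteSpace E] (hF : IsIndefiniteIntegral μ f fun _ => 0) : f =ᵐ[μ] 0 :=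
  ae_of_forall_ae_restrict_Ioc fun _ => hF.ae_restrict_eq_zero fun _ _ => rfl

theorem integral_eq_zero_of_eventually_eq_zero (hF : IsIndefiniteIntegral μ f F)
    (hf : Integrable f μ) (hzero : ∀ᶠ x in cocompact ℝ, F x = 0) : ∫ t, f t ∂μ = 0 := by
  rw [cocompact_eq_atBot_atTop, eventually_sup] at hzero
  have hlim := intervalIntegral_tendsto_integral hf tendsto_neg_atTop_atBot tendsto_id
  refine tendsto_nhds_unique hlim (tendsto_const_nhds.congr' ?_)
  filter_upwards [tendsto_neg_atTop_atBot.eventually hzero.1, hzero.2] with x hneg hpos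
  rw [← hF.sub_eq, id, hpos, hneg, sub_zero]

theorem tsum [CompleteSpace E] {f F : ℕ → ℝ → E} {φ : ℝ → ℝ}
    (hF : ∀ n, IsIndefiniteIntegral μ (f n) (F n))
    (hsum : ∀ x, Summable (F · x)) (hφ : LocallyIntegrable φ μ)
    (hbound : ∀ a b : ℝ, ∃ v : ℕ → ℝ, Summable v ∧ ∀ n, ∀ t ∈ Icc a b, ‖f n t‖ ≤ v n * φ t) :
    IsIndefiniteIntegral μ (fun t => ∑' n, f n t) (fun x => ∑' n, F n x) := by
  have hfsum : ∀ t, Summable (f · t) := fun t => by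
    obtain ⟨v, hv, hle⟩ := hbound t t
    exact .of_norm_bounded (hv.mul_right _) fun n => hle n t ⟨le_rfl, le_rfl⟩
  have hmeas : AEStronglyMeasurable (fun t => ∑' n, f n t) μ :=
    aestronglyMeasurable_of_tendsto_ae atTop
      (fun n => Finset.aestronglyMeasurable_fun_sum (Finset.range n) fun i _ =>
        (hF i).locallyIntegrable.aestronglyMeasurable)
      (ae_of_all _ fun t => (hfsum t).hasSum.tendsto_sum_nat)
  refine ⟨locallyIntegrable_of_integrableOn_Icc fun a b => ?_, fun c x => ?_⟩
  · obtain ⟨v, hv, hle⟩ := hbound a b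
    refine ((hφ.integrableOn_isCompact isCompact_Icc).const_mul (∑' n, v n)).mono' hmeas.restrict
      ((ae_restrict_iff' measurableSet_Icc).2 (ae_of_all _ fun t ht => ?_))
    rw [← tsum_mul_right]
    exact tsum_of_norm_bounded (hv.mul_right _).hasSum fun n => hle n t ht
  · obtain ⟨v, hv, hle⟩ := hbound (min c x) (max c x)
    have hint : HasSum (fun n => F n x - F n c) (∫ t in c..x, ∑' n, f n t ∂μ) := by
      simp only [(hF _).sub_eq]
      refine intervalIntegral.hasSum_integral_of_dominated_convergence (fun n t => v n * φ t)
        (fun n => (hF n).locallyIntegrable.aestronglyMeasurable.restrict)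
        (fun n => ae_of_all _ fun t ht => hle n t (Ioc_subset_Icc_self ht))
        (ae_of_all _ fun t _ => hv.mul_right _) ?_ (ae_of_all _ fun t _ => (hfsum t).hasSum)
      simp only [tsum_mul_right]
      exact (intervalIntegrable_of_locallyIntegrable hφ c x).const_mul _
    exact ((hsum x).hasSum.sub (hsum c).hasSum).unique hint

end NormedSpace

section Real

variable {μ : Measure ℝ} {f F : ℝ → ℝ}

theorem monotone (hF : IsIndefiniteIntegral μ f F) (hf : 0 ≤ᵐ[μ] f) : Monotone F :=
  fun c x hcx => sub_nonneg.1 (hF.sub_eq c x ▸ intervalIntegral.integral_nonneg_of_ae hcx hf)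

theorem bddAbove_range_iff (hF : IsIndefiniteIntegral μ f F) (hf : 0 ≤ᵐ[μ] f) :
    BddAbove (range F) ↔ IntegrableOn f (Ioi 0) μ := by
  constructor
  · rintro ⟨B, hB⟩
    refine integrableOn_Ioi_of_intervalIntegral_norm_bounded (B - F 0) 0
      (integrableOn_Ioc_of_locallyIntegrable hF.locallyIntegrable 0) tendsto_id ?_
    filter_upwards with x
    rw [intervalIntegral.integral_congr_ae (hf.mono fun t ht _ => Real.norm_of_nonneg ht),
      ← hF.sub_eq]
    exact sub_le_sub_right (hB (mem_range_self x)) _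
  · refine fun hi => ⟨F 0 + ∫ t in Ioi 0, f t ∂μ, ?_⟩
    rintro _ ⟨x, rfl⟩
    refine (hF.monotone hf (le_max_right 0 x)).trans ?_
    rw [hF.eq_add 0, intervalIntegral.integral_of_le (le_max_left 0 x)]
    exact add_le_add_right
      (setIntegral_mono_set hi (ae_restrict_of_ae hf) Ioc_subset_Ioi_self.eventuallyLE) _

theorem bddBelow_range_iff (hF : IsIndefiniteIntegral μ f F) (hf : 0 ≤ᵐ[μ] f) :
    BddBelow (range F) ↔ IntegrableOn f (Iic 0) μ := by
  constructor
  · rintro ⟨B, hB⟩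
    refine integrableOn_Iic_of_intervalIntegral_norm_bounded (F 0 - B) 0
      (fun x => integrableOn_Ioc_of_locallyIntegrable hF.locallyIntegrable x 0) tendsto_id ?_
    filter_upwards with x
    rw [intervalIntegral.integral_congr_ae (hf.mono fun t ht _ => Real.norm_of_nonneg ht),
      ← hF.sub_eq]
    exact sub_le_sub_left (hB (mem_range_self x)) _
  · refine fun hi => ⟨F 0 - ∫ t in Iic 0, f t ∂μ, ?_⟩
    rintro _ ⟨x, rfl⟩
    refine le_trans ?_ (hF.monotone hf (min_le_right 0 x))
    rw [sub_le_comm, hF.sub_eq, intervalIntegral.integral_of_le (min_le_left 0 x)]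
    exact setIntegral_mono_set hi (ae_restrict_of_ae hf) Ioc_subset_Iic_self.eventuallyLE

end Real

theorem conj {𝕜 : Type*} [RCLike 𝕜] {μ : Measure ℝ} {f F : ℝ → 𝕜}
    (hF : IsIndefiniteIntegral μ f F) :
    IsIndefiniteIntegral μ (fun t => starRingEnd 𝕜 (f t)) (fun x => starRingEnd 𝕜 (F x)) :=
  ⟨locallyIntegrable_conj hF.locallyIntegrable, fun c x => by
    rw [intervalIntegral.intervalIntegral_conj, ← hF.sub_eq, map_sub]⟩

theorem re {μ : Measure ℝ} {f : ℝ → ℝ} {F : ℝ → ℂ}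
    (hF : IsIndefiniteIntegral μ (fun t => (f t : ℂ)) F) :
    IsIndefiniteIntegral μ f (fun x => (F x).re) where
  locallyIntegrable := hF.locallyIntegrable.mono
    (hF.locallyIntegrable.aestronglyMeasurable.re) (ae_of_all _ fun t => (Complex.norm_real _).ge)
  sub_eq c x := by
    rw [← Complex.sub_re, hF.sub_eq, intervalIntegral.integral_ofReal, Complex.ofReal_re]

end IsIndefiniteIntegral

section WithDensity

variable {μ : Measure ℝ} {r : ℝ → ℝ} {f F : ℝ → ℂ}

theorem locallyIntegrable_withDensity_iff (hr : AEMeasurable r μ) (hpos : ∀ᵐ t ∂μ, 0 ≤ r t) :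
    LocallyIntegrable f (μ.withDensity fun t => ENNReal.ofReal (r t)) ↔
      LocallyIntegrable (fun t => r t * f t) μ := by
  have hI (s) (hs : MeasurableSet s) :
      IntegrableOn f s (μ.withDensity fun t => ENNReal.ofReal (r t)) ↔
        IntegrableOn (fun t => r t * f t) s μ := by
    rw [IntegrableOn, restrict_withDensity hs, integrable_withDensity_iff_integrable_smul₀'
      hr.ennreal_ofReal.restrict (ae_of_all _ fun _ => ENNReal.ofReal_lt_top), IntegrableOn]
    refine integrable_congr ((ae_restrict_of_ae hpos).mono fun t ht => ?_)
    simp only [ENNReal.toReal_ofReal ht, Complex.real_smul]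
  constructor <;> intro h <;> refine locallyIntegrable_of_integrableOn_Icc fun a b => ?_
  · exact (hI _ measurableSet_Icc).1 (h.integrableOn_isCompact isCompact_Icc)
  · exact (hI _ measurableSet_Icc).2 (h.integrableOn_isCompact isCompact_Icc)

theorem isLocallyFiniteMeasure_withDensity_ofReal (hr : LocallyIntegrable r μ) :
    IsLocallyFiniteMeasure (μ.withDensity fun t => ENNReal.ofReal (r t)) where
  finiteAtNhds x := by
    refine ⟨Icc (x - 1) (x + 1), Icc_mem_nhds (sub_one_lt x) (lt_add_one x), ?_⟩
    rw [withDensity_apply _ measurableSet_Icc]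
    exact (hr.integrableOn_isCompact isCompact_Icc).lintegral_lt_top

theorem isIndefiniteIntegral_withDensity_iff (hr : AEMeasurable r μ)
    (hpos : ∀ᵐ t ∂μ, 0 ≤ r t) :
    IsIndefiniteIntegral (μ.withDensity fun t => ENNReal.ofReal (r t)) f F ↔
      IsIndefiniteIntegral μ (fun t => r t * f t) F := by
  have hI (a b) : ∫ t in Ioc a b, f t ∂μ.withDensity (fun t => ENNReal.ofReal (r t)) =
      ∫ t in Ioc a b, r t * f t ∂μ := by
    rw [setIntegral_withDensity_eq_setIntegral_toReal_smul₀ hr.ennreal_ofReal.restrict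
      (ae_of_all _ fun _ => ENNReal.ofReal_lt_top) _ measurableSet_Ioc]
    refine integral_congr_ae ((ae_restrict_of_ae hpos).mono fun t ht => ?_)
    simp only [ENNReal.toReal_ofReal ht, Complex.real_smul]
  constructor <;> rintro ⟨hloc, hsub⟩
  · exact ⟨(locallyIntegrable_withDensity_iff hr hpos).1 hloc, by
      simpa only [intervalIntegral, hI] using hsub⟩
  · exact ⟨(locallyIntegrable_withDensity_iff hr hpos).2 hloc, by
      simpa only [intervalIntegral, hI] using hsub⟩

end WithDensity

/-! ### Sturm–Liouville systems with measure coefficients -/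

/-- `(u, u1)` is a solution of the first order system `du = w u1 dt`, `du1 = h dμ`, where `u1` is
the quasi-derivative of `u` and the real weight `w` stands for `1 / p`. -/
structure IsSLPair (w : ℝ → ℝ) (μ : Measure ℝ) (u u1 h : ℝ → ℂ) : Prop where
  fst : IsIndefiniteIntegral volume (fun t => u1 t * w t) u
  snd : IsIndefiniteIntegral μ h u1

namespace IsSLPair

variable {w : ℝ → ℝ} {μ : Measure ℝ} {u u1 h v v1 k : ℝ → ℂ}

theorem continuous (hu : IsSLPair w μ u u1 h) : Continuous u :=
  hu.fst.continuous

theorem add (hu : IsSLPair w μ u u1 h) (hv : IsSLPair w μ v v1 k) :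
    IsSLPair w μ (fun x => u x + v x) (fun x => u1 x + v1 x) (fun t => h t + k t) :=
  ⟨by simpa only [add_mul] using hu.fst.add hv.fst, hu.snd.add hv.snd⟩

theorem const_mul (hu : IsSLPair w μ u u1 h) (a : ℂ) :
    IsSLPair w μ (fun x => a * u x) (fun x => a * u1 x) (fun t => a * h t) :=
  ⟨by simpa only [mul_assoc] using hu.fst.const_mul a, hu.snd.const_mul a⟩

theorem conj (hu : IsSLPair w μ u u1 h) :
    IsSLPair w μ (fun x => starRingEnd ℂ (u x)) (fun x => starRingEnd ℂ (u1 x))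
      (fun t => starRingEnd ℂ (h t)) :=
  ⟨by simpa only [map_mul, Complex.conj_ofReal] using hu.fst.conj, hu.snd.conj⟩

theorem wronskian [IsLocallyFiniteMeasure μ] (hu : IsSLPair w μ u u1 h)
    (hv : IsSLPair w μ v v1 k) :
    IsIndefiniteIntegral μ (fun t => u t * k t - v t * h t) (Wr u u1 v v1) where
  locallyIntegrable := (hu.fst.locallyIntegrable_mul hv.snd.locallyIntegrable).sub
    (hv.fst.locallyIntegrable_mul hu.snd.locallyIntegrable)
  sub_eq c x := by
    have huv := hu.fst.mul_sub_mul hv.snd c x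
    have hvu := hv.fst.mul_sub_mul hu.snd c x
    have hcomm : ∫ t in c..x, v1 t * (u1 t * w t) = ∫ t in c..x, u1 t * (v1 t * w t) := by
      simp only [mul_left_comm]
    rw [intervalIntegral.integral_sub]
    · simp only [Wr]
      linear_combination huv - hvu + hcomm
    · exact intervalIntegrable_of_locallyIntegrable
        (hu.fst.locallyIntegrable_mul hv.snd.locallyIntegrable) c x
    · exact intervalIntegrable_of_locallyIntegrable
        (hv.fst.locallyIntegrable_mul hu.snd.locallyIntegrable) c x

end IsSLPair

section Existence

variable {w : ℝ → ℝ} {μ : Measure ℝ} {q g h : ℝ → ℂ} {a b c : ℝ}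

theorem isIndefiniteIntegral_add_integral {E : Type*} [NormedAddCommGroup E] [NormedSpace ℝ E]
    {f : ℝ → E} (hf : LocallyIntegrable f μ) (y : E) :
    IsIndefiniteIntegral μ f (fun x => y + ∫ t in c..x, f t ∂μ) :=
  .of_eq_add hf (c := c) fun x => by rw [intervalIntegral.integral_same, add_zero]

/-- The pair with density `h` and initial values `y`, `y1` at `c`. -/
noncomputable def slIntegral (w : ℝ → ℝ) (μ : Measure ℝ) (c : ℝ) (y y1 : ℂ) (h : ℝ → ℂ) :
    (ℝ → ℂ) × (ℝ → ℂ) :=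
  (fun x => y + ∫ t in c..x, (y1 + ∫ s in c..t, h s ∂μ) * w t, fun x => y1 + ∫ s in c..x, h s ∂μ)

theorem slIntegral_fst_self (y y1 : ℂ) : (slIntegral w μ c y y1 h).1 c = y := by
  simp only [slIntegral, intervalIntegral.integral_same, add_zero]

theorem slIntegral_snd_self (y y1 : ℂ) : (slIntegral w μ c y y1 h).2 c = y1 := by
  simp only [slIntegral, intervalIntegral.integral_same, add_zero]

theorem isSLPair_slIntegral (hw : LocallyIntegrable w) (hh : LocallyIntegrable h μ) (y y1 : ℂ) :
    IsSLPair w μ (slIntegral w μ c y y1 h).1 (slIntegral w μ c y y1 h).2 h :=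
  have hsnd := isIndefiniteIntegral_add_integral hh y1
  ⟨isIndefiniteIntegral_add_integral
    (hsnd.locallyIntegrable_mul (locallyIntegrable_ofReal hw)) y, hsnd⟩

theorem norm_integral_mul_le_of_norm_le {f : ℝ → ℂ} {B x : ℝ} (hq : LocallyIntegrable q μ)
    (hc : c ∈ Icc a b) (hx : x ∈ Icc a b) (hf : ∀ s ∈ uIoc c x, ‖f s‖ ≤ B) (hB : 0 ≤ B) :
    ‖∫ s in c..x, q s * f s ∂μ‖ ≤ (∫ s in Icc a b, ‖q s‖ ∂μ) * B := by
  have hsub : uIoc c x ⊆ Icc a b := uIoc_subset_uIcc.trans (uIcc_subset_Icc hc hx)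
  have hi : IntegrableOn (fun s => ‖q s‖ * B) (Icc a b) μ :=
    (hq.integrableOn_isCompact isCompact_Icc).norm.mul_const B
  rw [← integral_mul_const]
  calc ‖∫ s in c..x, q s * f s ∂μ‖ ≤ ∫ s in uIoc c x, ‖q s * f s‖ ∂μ :=
        intervalIntegral.norm_integral_le_integral_norm_uIoc
    _ ≤ ∫ s in uIoc c x, ‖q s‖ * B ∂μ := by
        refine integral_mono_of_nonneg (ae_of_all _ fun _ => norm_nonneg _) (hi.mono_set hsub)
          ((ae_restrict_iff' measurableSet_uIoc).2 (ae_of_all _ fun s hs => ?_))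
        exact (norm_mul _ _).trans_le (mul_le_mul_of_nonneg_left (hf s hs) (norm_nonneg _))
    _ ≤ ∫ s in Icc a b, ‖q s‖ * B ∂μ :=
        setIntegral_mono_set hi (ae_of_all _ fun _ => by positivity) hsub.eventuallyLE

theorem norm_slIntegral_fst_le {f : ℝ → ℂ} {A : ℝ} {Ω : ℝ → ℝ} (hq : LocallyIntegrable q μ)
    (hΩ : IsIndefiniteIntegral volume (fun t => |w t|) Ω) (hΩc : Ω c = 0) (hc : c ∈ Icc a b)
    (hA : 0 ≤ A) (n : ℕ) (hf : ∀ x ∈ Icc a b, ‖f x‖ ≤ A * |Ω x| ^ n) {x : ℝ} (hx : x ∈ Icc a b) :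
    ‖(slIntegral w μ c 0 0 (fun t => q t * f t)).1 x‖ ≤
      (∫ s in Icc a b, ‖q s‖ ∂μ) * A / (n + 1) * |Ω x| ^ (n + 1) := by
  set Q := ∫ s in Icc a b, ‖q s‖ ∂μ
  have hmono := hΩ.monotone (ae_of_all _ fun _ => abs_nonneg _)
  have habs : ∀ t, ∀ s ∈ uIoc c t, |Ω s| ≤ |Ω t| := fun t s hs => by
    rcases mem_uIoc.1 hs with hs | hs
    · rw [abs_of_nonneg (hΩc ▸ hmono hs.1.le), abs_of_nonneg (hΩc ▸ hmono (hs.1.le.trans hs.2))]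
      exact hmono hs.2
    · rw [abs_of_nonpos (hΩc ▸ hmono hs.2), abs_of_nonpos (hΩc ▸ hmono (hs.1.le.trans hs.2))]
      exact neg_le_neg (hmono hs.1.le)
  have hbound : ∀ t ∈ uIoc c x,
      ‖(∫ s in c..t, q s * f s ∂μ) * w t‖ ≤ Q * A * (|Ω t| ^ n * |w t|) := fun t ht => by
    have hsub : uIcc c x ⊆ Icc a b := uIcc_subset_Icc hc hx
    have htI : t ∈ Icc a b := hsub (uIoc_subset_uIcc ht)
    rw [norm_mul, Complex.norm_real, Real.norm_eq_abs, mul_assoc, ← mul_assoc A,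
      ← mul_assoc]
    refine mul_le_mul_of_nonneg_right ?_ (abs_nonneg _)
    refine norm_integral_mul_le_of_norm_le hq hc htI (fun s hs => ?_) (by positivity)
    exact (hf s (uIcc_subset_Icc hc htI (uIoc_subset_uIcc hs))).trans
      (mul_le_mul_of_nonneg_left (pow_le_pow_left₀ (abs_nonneg _) (habs t s hs) n) hA)
  have hint : LocallyIntegrable (fun t => Q * A * (|Ω t| ^ n * |w t|)) :=
    (hΩ.locallyIntegrable.continuous_mul (hΩ.continuous.abs.pow n)).smul (Q * A)
  calc ‖(slIntegral w μ c 0 0 (fun t => q t * f t)).1 x‖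
      ≤ |∫ t in c..x, Q * A * (|Ω t| ^ n * |w t|)| := by
        simp only [slIntegral, zero_add]
        exact intervalIntegral.norm_integral_le_abs_of_norm_le
          ((ae_restrict_iff' measurableSet_uIoc).2 (ae_of_all _ hbound))
          (intervalIntegrable_of_locallyIntegrable hint c x)
    _ = Q * A / (n + 1) * |Ω x| ^ (n + 1) := by
        rw [intervalIntegral.integral_const_mul, abs_mul, abs_of_nonneg (by positivity : 0 ≤ Q * A),
          hΩ.integral_abs_pow_mul (fun _ => abs_nonneg _) hΩc]
        ring

/-- Picard iterates for the Volterra equation `u = g + ∫ w ∫ q u dμ dt` based at `c`. -/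
noncomputable def picardIterate (w : ℝ → ℝ) (μ : Measure ℝ) (c : ℝ) (q g : ℝ → ℂ) : ℕ → ℝ → ℂ
  | 0 => g
  | n + 1 => (slIntegral w μ c 0 0 (fun t => q t * picardIterate w μ c q g n t)).1

theorem continuous_picardIterate [IsLocallyFiniteMeasure μ] (hw : LocallyIntegrable w)
    (hq : LocallyIntegrable q μ) (hg : Continuous g) (n : ℕ) :
    Continuous (picardIterate w μ c q g n) := by
  induction n with
  | zero => exact hg
  | succ n ih => exact (isSLPair_slIntegral hw (hq.mul_continuous ih) 0 0).continuous

theorem norm_picardIterate_le {M : ℝ} {Ω : ℝ → ℝ} (hq : LocallyIntegrable q μ)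
    (hΩ : IsIndefiniteIntegral volume (fun t => |w t|) Ω) (hΩc : Ω c = 0) (hc : c ∈ Icc a b)
    (hM : ∀ x ∈ Icc a b, ‖g x‖ ≤ M) (n : ℕ) {x : ℝ} (hx : x ∈ Icc a b) :
    ‖picardIterate w μ c q g n x‖ ≤
      M * (∫ s in Icc a b, ‖q s‖ ∂μ) ^ n / n.factorial * |Ω x| ^ n := by
  have hM0 : 0 ≤ M := (norm_nonneg _).trans (hM c hc)
  induction n generalizing x with
  | zero => simpa only [picardIterate, pow_zero, mul_one, Nat.factorial_zero, Nat.cast_one, div_one]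
      using hM x hx
  | succ n ih =>
    refine (norm_slIntegral_fst_le hq hΩ hΩc hc (by positivity) n (fun x => ih) hx).trans_eq ?_
    rw [Nat.factorial_succ]
    push_cast
    field_simp
    ring

theorem exists_summable_norm_picardIterate_le [IsLocallyFiniteMeasure μ]
    (hw : LocallyIntegrable w) (hq : LocallyIntegrable q μ) (hg : Continuous g)
    (hc : c ∈ Icc a b) :
    ∃ v : ℕ → ℝ, Summable v ∧ ∀ n, 0 ≤ v n ∧
      ∀ x ∈ Icc a b, ‖picardIterate w μ c q g n x‖ ≤ v n := by
  obtain ⟨M, hM⟩ := isCompact_Icc.exists_bound_of_continuousOn hg.continuousOn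
  have hΩ := isIndefiniteIntegral_add_integral (c := c) (locallyIntegrable_norm hw) 0
  obtain ⟨O, hO⟩ := isCompact_Icc.exists_bound_of_continuousOn hΩ.continuous.continuousOn
  have hM0 : 0 ≤ M := (norm_nonneg _).trans (hM c hc)
  have hO0 : 0 ≤ O := (norm_nonneg _).trans (hO c hc)
  refine ⟨fun n => M * (((∫ s in Icc a b, ‖q s‖ ∂μ) * O) ^ n / n.factorial),
    (Real.summable_pow_div_factorial _).mul_left M, fun n => ⟨by positivity, fun x hx => ?_⟩⟩
  refine (norm_picardIterate_le hq hΩ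
    (by rw [intervalIntegral.integral_same, add_zero]) hc hM n hx).trans ?_
  refine (mul_le_mul_of_nonneg_left (pow_le_pow_left₀ (abs_nonneg _) (hO x hx) n)
    (by positivity)).trans_eq ?_
  simp only [mul_pow]
  ring

theorem exists_summable_norm_slIntegral_picardIterate_le [IsLocallyFiniteMeasure μ]
    (hw : LocallyIntegrable w) (hq : LocallyIntegrable q μ) (hg : Continuous g) (c a b : ℝ) :
    ∃ v V : ℕ → ℝ, Summable v ∧ Summable V ∧ ∀ n, ∀ x ∈ Icc a b,
      ‖picardIterate w μ c q g n x‖ ≤ v n ∧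
        ‖(slIntegral w μ c 0 0 (fun t => q t * picardIterate w μ c q g n t)).2 x‖ ≤ V n := by
  have hc : c ∈ Icc (min a c) (max b c) := ⟨min_le_right _ _, le_max_right _ _⟩
  have hsub : Icc a b ⊆ Icc (min a c) (max b c) :=
    Icc_subset_Icc (min_le_left _ _) (le_max_left _ _)
  obtain ⟨v, hv, hle⟩ := exists_summable_norm_picardIterate_le hw hq hg hc
  refine ⟨v, _, hv, hv.mul_left (∫ s in Icc (min a c) (max b c), ‖q s‖ ∂μ),
    fun n x hx => ⟨(hle n).2 x (hsub hx), ?_⟩⟩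
  simp only [slIntegral, zero_add]
  exact norm_integral_mul_le_of_norm_le hq hc (hsub hx) (fun s hs => (hle n).2 s
    (uIcc_subset_Icc hc (hsub hx) (uIoc_subset_uIcc hs))) (hle n).1

theorem exists_isSLPair_volterra [IsLocallyFiniteMeasure μ] (hw : LocallyIntegrable w)
    (hq : LocallyIntegrable q μ) (hg : Continuous g) (c : ℝ) :
    ∃ v v1, IsSLPair w μ v v1 (fun t => q t * (g t + v t)) ∧ v c = 0 ∧ v1 c = 0 := by
  set U := picardIterate w μ c q g
  set P : ℕ → (ℝ → ℂ) × (ℝ → ℂ) := fun n => slIntegral w μ c 0 0 (fun t => q t * U n t)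
  have hP : ∀ n, IsSLPair w μ (P n).1 (P n).2 (fun t => q t * U n t) := fun n =>
    isSLPair_slIntegral hw (hq.mul_continuous (continuous_picardIterate hw hq hg n)) 0 0
  have hbound := exists_summable_norm_slIntegral_picardIterate_le hw hq hg c
  have hsumU : ∀ x, Summable (U · x) := fun x => by
    obtain ⟨v, V, hv, _, hle⟩ := hbound x x
    exact .of_norm_bounded hv fun n => (hle n x ⟨le_rfl, le_rfl⟩).1
  have hsumP : ∀ x, Summable fun n => (P n).2 x := fun x => by
    obtain ⟨v, V, _, hV, hle⟩ := hbound x x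
    exact .of_norm_bounded hV fun n => (hle n x ⟨le_rfl, le_rfl⟩).2
  have hfst := IsIndefiniteIntegral.tsum (fun n => (hP n).fst)
    (fun x => (summable_nat_add_iff 1).2 (hsumU x)) (locallyIntegrable_norm hw) fun a b => by
      obtain ⟨v, V, _, hV, hle⟩ := hbound a b
      refine ⟨V, hV, fun n t ht => ?_⟩
      rw [norm_mul, Complex.norm_real]
      exact mul_le_mul_of_nonneg_right (hle n t ht).2 (norm_nonneg _)
  have hsnd := IsIndefiniteIntegral.tsum (fun n => (hP n).snd) hsumP (locallyIntegrable_norm hq)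
    fun a b => by
      obtain ⟨v, V, hv, _, hle⟩ := hbound a b
      refine ⟨v, hv, fun n t ht => ?_⟩
      rw [norm_mul, mul_comm]
      exact mul_le_mul_of_nonneg_right (hle n t ht).1 (norm_nonneg _)
  refine ⟨fun x => ∑' n, (P n).1 x, fun x => ∑' n, (P n).2 x, ⟨?_, ?_⟩, ?_, ?_⟩
  · simpa only [tsum_mul_right] using hfst
  · have hdensity : ∀ t, ∑' n, q t * U n t = q t * (g t + ∑' n, (P n).1 t) := fun t => by
      rw [tsum_mul_left, (hsumU t).tsum_eq_zero_add]
      rfl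
    simpa only [hdensity] using hsnd
  · simp only [P, slIntegral_fst_self, tsum_zero]
  · simp only [P, slIntegral_snd_self, tsum_zero]

theorem exists_isSLPair [IsLocallyFiniteMeasure μ] (hw : LocallyIntegrable w)
    (hq : LocallyIntegrable q μ) (hh : LocallyIntegrable h μ) (c : ℝ) (y y1 : ℂ) :
    ∃ u u1, IsSLPair w μ u u1 (fun t => q t * u t + h t) ∧ u c = y ∧ u1 c = y1 := by
  have hg := isSLPair_slIntegral (c := c) hw hh y y1
  obtain ⟨v, v1, hv, hvc, hv1c⟩ := exists_isSLPair_volterra hw hq hg.continuous c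
  set G := slIntegral w μ c y y1 h
  refine ⟨fun x => G.1 x + v x, fun x => G.2 x + v1 x, ?_, ?_, ?_⟩
  · simpa only [add_comm (h _)] using hg.add hv
  · simp only [G, slIntegral_fst_self, hvc, add_zero]
  · simp only [G, slIntegral_snd_self, hv1c, add_zero]

end Existence

/-- A Sturm–Liouville equation with measure coefficients: the first order system `du = w u1 dt`,
`du1 = (q u - r g) dμ`, where `w` stands for `1 / p` and `r` is the positive weight. -/
structure SturmLiouville where
  w : ℝ → ℝ
  r : ℝ → ℝ
  q : ℝ → ℝ
  μ : Measure ℝ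
  locallyIntegrable_w : LocallyIntegrable w
  locallyIntegrable_r : LocallyIntegrable r μ
  locallyIntegrable_q : LocallyIntegrable q μ
  pos_r : ∀ᵐ t ∂μ, 0 < r t
  isLocallyFiniteMeasure_μ : IsLocallyFiniteMeasure μ

namespace SturmLiouville

variable (L : SturmLiouville)

instance : IsLocallyFiniteMeasure L.μ := L.isLocallyFiniteMeasure_μ

/-- The weight measure `r dμ`, which defines the Hilbert space of the equation. -/
noncomputable def ρ : Measure ℝ := L.μ.withDensity fun t => ENNReal.ofReal (L.r t)

instance : IsLocallyFiniteMeasure L.ρ :=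
  isLocallyFiniteMeasure_withDensity_ofReal L.locallyIntegrable_r

theorem aemeasurable_r : AEMeasurable L.r L.μ :=
  L.locallyIntegrable_r.aestronglyMeasurable.aemeasurable

theorem nonneg_r : ∀ᵐ t ∂L.μ, 0 ≤ L.r t :=
  L.pos_r.mono fun _ => le_of_lt

theorem ae_ρ : ae L.ρ = ae L.μ :=
  (withDensity_absolutelyContinuous _ _).ae_le.antisymm
    (withDensity_absolutelyContinuous' L.aemeasurable_r.ennreal_ofReal
      (L.pos_r.mono fun _ ht => (ENNReal.ofReal_pos.2 ht).ne')).ae_le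

theorem locallyIntegrable_ρ_iff {f : ℝ → ℂ} :
    LocallyIntegrable f L.ρ ↔ LocallyIntegrable (fun t => L.r t * f t) L.μ :=
  locallyIntegrable_withDensity_iff L.aemeasurable_r L.nonneg_r

theorem isIndefiniteIntegral_ρ_iff {f F : ℝ → ℂ} :
    IsIndefiniteIntegral L.ρ f F ↔ IsIndefiniteIntegral L.μ (fun t => L.r t * f t) F :=
  isIndefiniteIntegral_withDensity_iff L.aemeasurable_r L.nonneg_r

/-- `(u, u1)` solves the inhomogeneous equation `ℓ u = g`, where `ℓ u = (-du1/dμ + q u) / r`. -/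
def Solves (u u1 g : ℝ → ℂ) : Prop :=
  IsSLPair L.w L.μ u u1 fun t => L.q t * u t - L.r t * g t

variable {L} {u u1 v v1 g k : ℝ → ℂ}

namespace Solves

theorem continuous (hu : L.Solves u u1 g) : Continuous u :=
  IsSLPair.continuous hu

theorem congr_ae (hu : L.Solves u u1 g) (h : g =ᵐ[L.ρ] k) : L.Solves u u1 k := by
  refine ⟨hu.fst, hu.snd.congr_ae ?_⟩
  rw [L.ae_ρ] at h
  filter_upwards [h] with t ht
  rw [ht]

theorem add (hu : L.Solves u u1 g) (hv : L.Solves v v1 k) :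
    L.Solves (fun x => u x + v x) (fun x => u1 x + v1 x) (fun t => g t + k t) := by
  refine (congrArg (IsSLPair L.w L.μ _ _) (funext fun t => ?_)).mp (IsSLPair.add hu hv)
  ring

theorem const_mul (hu : L.Solves u u1 g) (a : ℂ) :
    L.Solves (fun x => a * u x) (fun x => a * u1 x) (fun t => a * g t) := by
  refine (congrArg (IsSLPair L.w L.μ _ _) (funext fun t => ?_)).mp (IsSLPair.const_mul hu a)
  ring

theorem conj (hu : L.Solves u u1 g) :
    L.Solves (fun x => starRingEnd ℂ (u x)) (fun x => starRingEnd ℂ (u1 x))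
      (fun t => starRingEnd ℂ (g t)) := by
  simpa only [Solves, map_sub, map_mul, Complex.conj_ofReal] using IsSLPair.conj hu

theorem wronskian (hu : L.Solves u u1 g) (hv : L.Solves v v1 k) :
    IsIndefiniteIntegral L.ρ (fun t => g t * v t - u t * k t) (Wr u u1 v v1) := by
  rw [isIndefiniteIntegral_ρ_iff]
  refine (congrArg (IsIndefiniteIntegral L.μ · _) (funext fun t => ?_)).mp
    (IsSLPair.wronskian hu hv)
  ring

theorem wr_eq_of_mul_eq (hu : L.Solves u u1 g) (hv : L.Solves v v1 k)
    (h : ∀ t, g t * v t = u t * k t) (c x : ℝ) : Wr u u1 v v1 x = Wr u u1 v v1 c := by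
  simpa only [h, sub_self, intervalIntegral.integral_zero, add_zero]
    using (hu.wronskian hv).eq_add c x

theorem wr_eq (hu : L.Solves u u1 fun _ => 0) (hv : L.Solves v v1 fun _ => 0) (c x : ℝ) :
    Wr u u1 v v1 x = Wr u u1 v v1 c :=
  hu.wr_eq_of_mul_eq hv (fun _ => by rw [zero_mul, mul_zero]) c x

end Solves

theorem exists_solves (hg : LocallyIntegrable g L.ρ) (c : ℝ) (y y1 : ℂ) :
    ∃ u u1, L.Solves u u1 g ∧ u c = y ∧ u1 c = y1 := by
  obtain ⟨u, u1, hu, hc⟩ := exists_isSLPair L.locallyIntegrable_w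
    (locallyIntegrable_ofReal L.locallyIntegrable_q) (L.locallyIntegrable_ρ_iff.1 hg).neg c y y1
  exact ⟨u, u1, by simpa only [Solves, sub_eq_add_neg, Pi.neg_apply] using hu, hc⟩

theorem exists_fundamental_system :
    ∃ θ θ1 φ φ1, L.Solves θ θ1 (fun _ => 0) ∧ L.Solves φ φ1 (fun _ => 0) ∧
      ∀ x, Wr θ θ1 φ φ1 x = 1 := by
  obtain ⟨θ, θ1, hθ, h0, h1⟩ := exists_solves (L := L) (locallyIntegrable_const 0) 0 1 0
  obtain ⟨φ, φ1, hφ, k0, k1⟩ := exists_solves (L := L) (locallyIntegrable_const 0) 0 0 1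
  refine ⟨θ, θ1, φ, φ1, hθ, hφ, fun x => ?_⟩
  rw [hθ.wr_eq hφ 0, Wr, h0, h1, k0, k1]
  ring

end SturmLiouville

theorem eq_zero_of_wr_eq_zero {u u1 θ θ1 φ φ1 : ℝ → ℂ} {x : ℝ} (hθφ : Wr θ θ1 φ φ1 x = 1)
    (hθ : Wr u u1 θ θ1 x = 0) (hφ : Wr u u1 φ φ1 x = 0) : u x = 0 ∧ u1 x = 0 := by
  simp only [Wr] at hθφ hθ hφ
  constructor
  · linear_combination θ x * hφ - φ x * hθ - u x * hθφ
  · linear_combination θ1 x * hφ - φ1 x * hθ - u1 x * hθφ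

theorem SturmLiouville.Solves.eq_of_eq {L : SturmLiouville} {u u1 v v1 g : ℝ → ℂ} {c : ℝ}
    (hu : L.Solves u u1 g) (hv : L.Solves v v1 g) (h : u c = v c) (h1 : u1 c = v1 c) : u = v := by
  obtain ⟨θ, θ1, φ, φ1, hθ, hφ, hθφ⟩ := exists_fundamental_system (L := L)
  have hsub : L.Solves (fun x => u x + -1 * v x) (fun x => u1 x + -1 * v1 x) fun _ => 0 := by
    simpa only [neg_one_mul, add_neg_cancel] using hu.add (hv.const_mul (-1))
  have hwr {y y1} (hy : L.Solves y y1 fun _ => 0) (x) :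
      Wr (fun x => u x + -1 * v x) (fun x => u1 x + -1 * v1 x) y y1 x = 0 := by
    rw [hsub.wr_eq hy c, Wr, h, h1]
    ring
  funext x
  linear_combination (eq_zero_of_wr_eq_zero (hθφ x) (hwr hθ x) (hwr hφ x)).1

/-! ### The energy of a solution -/

section L2

variable {α 𝕜 : Type*} [MeasurableSpace α] [RCLike 𝕜] {m : Measure α} {f g : α → 𝕜}

theorem inner_eq_integral_mul_conj {F G : Lp 𝕜 2 m} (hF : F =ᵐ[m] f) (hG : G =ᵐ[m] g) :
    inner 𝕜 G F = ∫ t, f t * starRingEnd 𝕜 (g t) ∂m := by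
  rw [L2.inner_def]
  refine integral_congr_ae ?_
  filter_upwards [hF, hG] with t hf hg
  rw [hf, hg, RCLike.inner_apply]

theorem integrable_mul_conj (hf : MemLp f 2 m) (hg : MemLp g 2 m) :
    Integrable (fun t => f t * starRingEnd 𝕜 (g t)) m :=
  hf.integrable_mul hg.star

theorem norm_integral_mul_conj_sq_le (hf : MemLp f 2 m) (hg : MemLp g 2 m) :
    ‖∫ t, f t * starRingEnd 𝕜 (g t) ∂m‖ ^ 2 ≤ (∫ t, ‖f t‖ ^ 2 ∂m) * ∫ t, ‖g t‖ ^ 2 ∂m := by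
  have hnorm {f : α → 𝕜} (hf : MemLp f 2 m) : ‖hf.toLp f‖ ^ 2 = ∫ t, ‖f t‖ ^ 2 ∂m := by
    rw [← RCLike.ofReal_inj (K := 𝕜), RCLike.ofReal_pow, ← inner_self_eq_norm_sq_to_K,
      inner_eq_integral_mul_conj hf.coeFn_toLp hf.coeFn_toLp, ← integral_ofReal]
    simp only [RCLike.mul_conj, RCLike.ofReal_pow]
  rw [← inner_eq_integral_mul_conj hf.coeFn_toLp hg.coeFn_toLp, ← hnorm hf, ← hnorm hg, mul_comm,
    ← mul_pow]
  exact pow_le_pow_left₀ (norm_nonneg _) (norm_inner_le_norm _ _) 2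

theorem memLp_two_restrict_Ioc_of_continuous {μ : Measure ℝ} [IsLocallyFiniteMeasure μ]
    {w : ℝ → 𝕜} (hw : Continuous w) (a b : ℝ) : MemLp w 2 (μ.restrict (Ioc a b)) :=
  (memLp_two_iff_integrable_sq_norm hw.aestronglyMeasurable).2
    (integrableOn_Ioc_of_locallyIntegrable (hw.norm.pow 2).locallyIntegrable a b)

end L2

theorem nonpos_of_bddAbove_of_mul_eq_norm_sq_sub {ι E : Type*} [Preorder ι] [IsDirectedOrder ι]
    [SeminormedAddCommGroup E] {A B : ι → ℝ} {H : ι → E} {D : ℝ} (hA : Monotone A)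
    (hB : Monotone B) (hAB : ∀ x, A x * B x = ‖H x‖ ^ 2 - D)
    (hH : ∀ x y, y ≤ x → ‖H x - H y‖ ^ 2 ≤ (A x - A y) * (B x - B y))
    (hbdd : BddAbove (range A)) (hunbdd : ¬BddAbove (range B)) (y : ι) : A y ≤ 0 := by
  by_contra! ha
  obtain ⟨K, hK⟩ := hbdd
  have hK (x) : A x ≤ K := hK (mem_range_self x)
  have hKpos : 0 < K := ha.trans_le (hK y)
  refine hunbdd ⟨max 0 (2 / A y *
    (K * |B y| + A y / (2 * K) * |D| + (A y / (2 * K))⁻¹ * ‖H y‖ ^ 2 + 2 * |D|)), ?_⟩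
  rintro _ ⟨x', rfl⟩
  obtain ⟨x, hx', hx⟩ := exists_ge_ge x' y
  refine (hB hx').trans (le_max_iff.2 (or_iff_not_imp_left.2 fun hBx => ?_))
  push Not at hBx
  have hgrowth : A y * B x ≤ 2 * ‖H x‖ * ‖H y‖ - A x * B y - 2 * D := by
    have hnorm : (‖H x‖ - ‖H y‖) ^ 2 ≤ ‖H x - H y‖ ^ 2 :=
      sq_le_sq.2 ((abs_norm_sub_norm_le _ _).trans_eq (abs_norm _).symm)
    linarith [hnorm.trans (hH x y hx), hAB x, hAB y]
  have hamgm := two_mul_le_add_mul_sq (a := ‖H x‖) (b := ‖H y‖) (ε := A y / (2 * K)) (by positivity)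
  have hHx : A y / (2 * K) * ‖H x‖ ^ 2 ≤ A y * B x / 2 + A y / (2 * K) * |D| := by
    have hle : ‖H x‖ ^ 2 ≤ K * B x + |D| := by
      linarith [hAB x, mul_le_mul_of_nonneg_right (hK x) hBx.le, le_abs_self D]
    refine (mul_le_mul_of_nonneg_left hle (by positivity)).trans_eq ?_
    field_simp
  have hBy : -(A x * B y) ≤ K * |B y| := by
    refine (neg_le_abs _).trans ((abs_mul _ _).trans_le ?_)
    rw [abs_of_pos (ha.trans_le (hA hx))]
    exact mul_le_mul_of_nonneg_right (hK x) (abs_nonneg _)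
  rw [div_mul_eq_mul_div, le_div_iff₀ ha]
  linarith [neg_le_abs D]

theorem nonneg_of_bddBelow_of_mul_eq_norm_sq_sub {ι E : Type*} [Preorder ι] [IsCodirectedOrder ι]
    [SeminormedAddCommGroup E] {A B : ι → ℝ} {H : ι → E} {D : ℝ} (hA : Monotone A)
    (hB : Monotone B) (hAB : ∀ x, A x * B x = ‖H x‖ ^ 2 - D)
    (hH : ∀ x y, y ≤ x → ‖H x - H y‖ ^ 2 ≤ (A x - A y) * (B x - B y))
    (hbdd : BddBelow (range A)) (hunbdd : ¬BddBelow (range B)) (y : ι) : 0 ≤ A y := by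
  have hneg {f : ι → ℝ} (hf : Monotone f) : Monotone fun x : ιᵒᵈ => -f x.ofDual :=
    fun _ _ h => neg_le_neg (hf h)
  obtain ⟨m, hm⟩ := hbdd
  refine neg_nonpos.1 (nonpos_of_bddAbove_of_mul_eq_norm_sq_sub (ι := ιᵒᵈ) (D := D)
    (H := fun x => H x.ofDual) (hneg hA) (hneg hB) (fun x => ?_) (fun x y hxy => ?_)
    ⟨-m, forall_mem_range.2 fun x => neg_le_neg (hm (mem_range_self _))⟩ ?_ (.toDual y))
  · rw [neg_mul_neg, hAB]
  · rw [norm_sub_rev, neg_sub_neg, neg_sub_neg]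
    exact hH _ _ hxy
  · rintro ⟨K, hK⟩
    exact hunbdd ⟨-K, forall_mem_range.2 fun x => neg_le.1 (hK ⟨.toDual x, rfl⟩)⟩

section Energy

variable {L : SturmLiouville} {u u1 v v1 : ℝ → ℂ} {z : ℂ}

/-- The sesquilinear form in the pairs `(u, u1)` and `(v, v1)` whose increments are the integrals of
`u * conj v` with respect to `r dμ` if both pairs solve `(ℓ - z) u = 0` with `z` non-real. -/
noncomputable def energyForm (z : ℂ) (u u1 v v1 : ℝ → ℂ) (x : ℝ) : ℂ :=
  Wr u u1 (fun t => starRingEnd ℂ (v t)) (fun t => starRingEnd ℂ (v1 t)) x /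
    (z - starRingEnd ℂ z)

theorem SturmLiouville.Solves.isIndefiniteIntegral_energyForm (hu : L.Solves u u1 fun t => z * u t)
    (hv : L.Solves v v1 fun t => z * v t) (hz : z.im ≠ 0) :
    IsIndefiniteIntegral L.ρ (fun t => u t * starRingEnd ℂ (v t)) (energyForm z u u1 v v1) := by
  have hz' : z - starRingEnd ℂ z ≠ 0 := sub_ne_zero.2 fun h => hz (Complex.conj_eq_iff_im.1 h.symm)
  have h := (hu.wronskian hv.conj).const_mul (z - starRingEnd ℂ z)⁻¹
  refine (congrArg₂ (IsIndefiniteIntegral L.ρ) (funext fun t => ?_) (funext fun x => ?_)).mp h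
  · simp only [map_mul]
    field_simp
  · exact (div_eq_inv_mul _ _).symm

/-- The quadratic form of `energyForm`. -/
noncomputable def energy (z : ℂ) (u u1 : ℝ → ℂ) (x : ℝ) : ℝ :=
  (energyForm z u u1 u u1 x).re

theorem SturmLiouville.Solves.isIndefiniteIntegral_energy (hu : L.Solves u u1 fun t => z * u t)
    (hz : z.im ≠ 0) : IsIndefiniteIntegral L.ρ (fun t => ‖u t‖ ^ 2) (energy z u u1) := by
  refine IsIndefiniteIntegral.re ((congrArg (IsIndefiniteIntegral L.ρ · _) ?_).mp
    (hu.isIndefiniteIntegral_energyForm hu hz))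
  funext t
  rw [Complex.mul_conj', Complex.ofReal_pow]

-- The Plücker relation for the `2 × 4` matrix with columns `u, v, conj u, conj v`.
theorem energy_mul_energy (hz : z.im ≠ 0) (u u1 v v1 : ℝ → ℂ) (x : ℝ) :
    energy z u u1 x * energy z v v1 x =
      ‖energyForm z u u1 v v1 x‖ ^ 2 - ‖Wr u u1 v v1 x‖ ^ 2 / (2 * z.im) ^ 2 := by
  simp only [energy, energyForm, Wr, ← Complex.normSq_eq_norm_sq, Complex.normSq_apply,
    Complex.div_re, Complex.div_im, Complex.sub_re, Complex.sub_im, Complex.mul_re, Complex.mul_im,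
    Complex.conj_re, Complex.conj_im]
  field_simp
  ring

theorem SturmLiouville.Solves.norm_energyForm_sub_sq_le (hu : L.Solves u u1 fun t => z * u t)
    (hv : L.Solves v v1 fun t => z * v t) (hz : z.im ≠ 0) {x y : ℝ} (hxy : y ≤ x) :
    ‖energyForm z u u1 v v1 x - energyForm z u u1 v v1 y‖ ^ 2 ≤
      (energy z u u1 x - energy z u u1 y) * (energy z v v1 x - energy z v v1 y) := by
  rw [(hu.isIndefiniteIntegral_energyForm hv hz).sub_eq,
    (hu.isIndefiniteIntegral_energy hz).sub_eq, (hv.isIndefiniteIntegral_energy hz).sub_eq]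
  simp only [intervalIntegral.integral_of_le hxy]
  exact norm_integral_mul_conj_sq_le (memLp_two_restrict_Ioc_of_continuous hu.continuous y x)
    (memLp_two_restrict_Ioc_of_continuous hv.continuous y x)

end Energy

namespace SturmLiouville

/-- For every `z` some solution of `(ℓ - z) u = 0` is not square integrable on `s`. With `s` a
half-line this is the limit-point case at the corresponding end. -/
def LimitPointOn (L : SturmLiouville) (s : Set ℝ) : Prop :=
  ∀ z : ℂ, ∃ v v1, L.Solves v v1 (fun t => z * v t) ∧ ¬IntegrableOn (fun t => ‖v t‖ ^ 2) s L.ρ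

variable {L : SturmLiouville} {u u1 : ℝ → ℂ} {z : ℂ}

theorem Solves.energy_nonpos (hu : L.Solves u u1 fun t => z * u t) (hz : z.im ≠ 0)
    (hint : IntegrableOn (fun t => ‖u t‖ ^ 2) (Ioi 0) L.ρ) (hlp : L.LimitPointOn (Ioi 0)) (x : ℝ) :
    energy z u u1 x ≤ 0 := by
  obtain ⟨v, v1, hv, hvint⟩ := hlp z
  have hu' := hu.isIndefiniteIntegral_energy hz
  have hv' := hv.isIndefiniteIntegral_energy hz
  have hsq (w : ℝ → ℂ) : 0 ≤ᵐ[L.ρ] fun t => ‖w t‖ ^ 2 := ae_of_all _ fun _ => by positivity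
  refine nonpos_of_bddAbove_of_mul_eq_norm_sq_sub (D := ‖Wr u u1 v v1 0‖ ^ 2 / (2 * z.im) ^ 2)
    (hu'.monotone (hsq u)) (hv'.monotone (hsq v)) (fun x => ?_)
    (fun _ _ => hu.norm_energyForm_sub_sq_le hv hz) ((hu'.bddAbove_range_iff (hsq u)).2 hint)
    (mt (hv'.bddAbove_range_iff (hsq v)).1 hvint) x
  rw [energy_mul_energy hz, hu.wr_eq_of_mul_eq hv (fun t => by ring) 0]

theorem Solves.energy_nonneg (hu : L.Solves u u1 fun t => z * u t) (hz : z.im ≠ 0)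
    (hint : IntegrableOn (fun t => ‖u t‖ ^ 2) (Iic 0) L.ρ) (hlp : L.LimitPointOn (Iic 0)) (x : ℝ) :
    0 ≤ energy z u u1 x := by
  obtain ⟨v, v1, hv, hvint⟩ := hlp z
  have hu' := hu.isIndefiniteIntegral_energy hz
  have hv' := hv.isIndefiniteIntegral_energy hz
  have hsq (w : ℝ → ℂ) : 0 ≤ᵐ[L.ρ] fun t => ‖w t‖ ^ 2 := ae_of_all _ fun _ => by positivity
  refine nonneg_of_bddBelow_of_mul_eq_norm_sq_sub (D := ‖Wr u u1 v v1 0‖ ^ 2 / (2 * z.im) ^ 2)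
    (hu'.monotone (hsq u)) (hv'.monotone (hsq v)) (fun x => ?_)
    (fun _ _ => hu.norm_energyForm_sub_sq_le hv hz) ((hu'.bddBelow_range_iff (hsq u)).2 hint)
    (mt (hv'.bddBelow_range_iff (hsq v)).1 hvint) x
  rw [energy_mul_energy hz, hu.wr_eq_of_mul_eq hv (fun t => by ring) 0]

theorem Solves.ae_eq_zero_of_limitPointOn (hu : L.Solves u u1 fun t => z * u t) (hz : z.im ≠ 0)
    (hint : Integrable (fun t => ‖u t‖ ^ 2) L.ρ) (hright : L.LimitPointOn (Ioi 0))
    (hleft : L.LimitPointOn (Iic 0)) : u =ᵐ[L.ρ] 0 := by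
  have henergy : energy z u u1 = fun _ => 0 := funext fun x =>
    (hu.energy_nonpos hz hint.integrableOn hright x).antisymm
      (hu.energy_nonneg hz hint.integrableOn hleft x)
  have hzero := hu.isIndefiniteIntegral_energy hz
  rw [henergy] at hzero
  exact hzero.ae_eq_zero.mono fun t ht => norm_eq_zero.1 (pow_eq_zero_iff two_ne_zero |>.1 ht)

end SturmLiouville

/-! ### The minimal and maximal relations -/

theorem exists_eq_smul_add_smul_of_forall_inner_eq_zero {𝕜 E : Type*} [RCLike 𝕜]
    [NormedAddCommGroup E] [InnerProductSpace 𝕜 E] {a b f : E}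
    (h : ∀ φ, inner 𝕜 a φ = 0 → inner 𝕜 b φ = 0 → inner 𝕜 φ f = 0) :
    ∃ α β : 𝕜, f = α • a + β • b := by
  have hf : f ∈ (Submodule.span 𝕜 {a, b})ᗮᗮ := fun φ hφ =>
    h φ (hφ a (Submodule.subset_span (mem_insert a _)))
      (hφ b (Submodule.subset_span (mem_insert_of_mem a rfl)))
  have := FiniteDimensional.span_of_finite 𝕜 (toFinite {a, b})
  rw [Submodule.orthogonal_orthogonal, Submodule.mem_span_pair] at hf
  obtain ⟨α, β, h⟩ := hf
  exact ⟨α, β, h.symm⟩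

namespace SturmLiouville

variable {L : SturmLiouville} {u u1 v v1 y y1 θ θ1 φ φ1 g k : ℝ → ℂ} {a b x : ℝ}

theorem Solves.wr_eq_zero_of_notMem_Ioo (hy : L.Solves y y1 g) (hya : y a = 0) (hy1a : y1 a = 0)
    (hg : ∀ t ∉ Ioc a b, g t = 0) (hv : L.Solves v v1 fun _ => 0)
    (hint : ∫ t in Ioc a b, g t * v t ∂L.ρ = 0) (hx : x ∉ Ioo a b) : Wr y y1 v v1 x = 0 := by
  have hwr : Wr y y1 v v1 x = ∫ t in a..x, g t * v t ∂L.ρ := by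
    simpa only [Wr, hya, hy1a, zero_mul, mul_zero, sub_zero, zero_add]
      using (hy.wronskian hv).eq_add a x
  rw [hwr]
  rcases le_or_gt x a with hxa | hax
  · refine intervalIntegral.integral_zero_ae (ae_of_all _ fun t ht => ?_)
    rw [uIoc_of_ge hxa] at ht
    rw [hg t fun h => h.1.not_ge ht.2, zero_mul]
  · rw [intervalIntegral.integral_of_le hax.le, ← hint]
    refine setIntegral_eq_of_subset_of_forall_sdiff_eq_zero measurableSet_Ioc
      (Ioc_subset_Ioc_right (not_lt.1 fun h => hx ⟨hax, h⟩)) fun t ht => ?_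
    rw [hg t ht.2, zero_mul]

theorem exists_solves_eventually_eq_zero (hg : LocallyIntegrable g L.ρ)
    (hg0 : ∀ t ∉ Ioc a b, g t = 0) (hθ : L.Solves θ θ1 fun _ => 0) (hφ : L.Solves φ φ1 fun _ => 0)
    (hθφ : ∀ x, Wr θ θ1 φ φ1 x = 1) (hgθ : ∫ t in Ioc a b, g t * θ t ∂L.ρ = 0)
    (hgφ : ∫ t in Ioc a b, g t * φ t ∂L.ρ = 0) :
    ∃ y y1, L.Solves y y1 g ∧ ∀ᶠ x in cocompact ℝ, y x = 0 ∧ y1 x = 0 := by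
  obtain ⟨y, y1, hy, hya, hy1a⟩ := exists_solves hg a 0 0
  refine ⟨y, y1, hy, ?_⟩
  filter_upwards [isCompact_Icc.compl_mem_cocompact (s := Icc a b)] with x hx
  have hx : x ∉ Ioo a b := fun h => hx (Ioo_subset_Icc_self h)
  exact eq_zero_of_wr_eq_zero (hθφ x) (hy.wr_eq_zero_of_notMem_Ioo hya hy1a hg0 hθ hgθ hx)
    (hy.wr_eq_zero_of_notMem_Ioo hya hy1a hg0 hφ hgφ hx)

theorem Solves.integral_mul_conj_eq (hu : L.Solves u u1 k) (hy : L.Solves y y1 g)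
    (hzero : ∀ᶠ x in cocompact ℝ, y x = 0 ∧ y1 x = 0)
    (hug : Integrable (fun t => u t * starRingEnd ℂ (g t)) L.ρ)
    (hky : Integrable (fun t => k t * starRingEnd ℂ (y t)) L.ρ) :
    ∫ t, u t * starRingEnd ℂ (g t) ∂L.ρ = ∫ t, k t * starRingEnd ℂ (y t) ∂L.ρ := by
  rw [eq_comm, ← sub_eq_zero, ← integral_sub hky hug]
  refine (hu.wronskian hy.conj).integral_eq_zero_of_eventually_eq_zero (hky.sub hug) ?_
  filter_upwards [hzero] with x hx
  rw [Wr, hx.1, hx.2, map_zero, mul_zero, mul_zero, sub_zero]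

variable (L) in
/-- The minimal relation of the equation: the pairs `(u, ℓ u)` in `L²(r dμ)` with `u` and `u1`
compactly supported. -/
noncomputable def minGraph : Submodule ℂ (Lp ℂ 2 L.ρ × Lp ℂ 2 L.ρ) where
  carrier := {x | ∃ u u1, L.Solves u u1 x.2 ∧ x.1 =ᵐ[L.ρ] u ∧
    ∀ᶠ t in cocompact ℝ, u t = 0 ∧ u1 t = 0}
  add_mem' := by
    rintro ⟨F, G⟩ ⟨F', G'⟩ ⟨u, u1, hu, hFu, hu0⟩ ⟨v, v1, hv, hFv, hv0⟩
    refine ⟨_, _, (hu.add hv).congr_ae (Lp.coeFn_add G G').symm,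
      (Lp.coeFn_add F F').trans (hFu.add hFv), ?_⟩
    filter_upwards [hu0, hv0] with t hut hvt
    simp only [hut, hvt, add_zero, and_self]
  zero_mem' := by
    refine ⟨fun _ => 0, fun _ => 0, ?_, Lp.coeFn_zero _ _ _, .of_forall fun _ => ⟨rfl, rfl⟩⟩
    have h : L.Solves (fun _ => 0) (fun _ => 0) fun _ => 0 := by
      obtain ⟨u, u1, hu, -⟩ := exists_solves (L := L) (locallyIntegrable_const 0) 0 0 0
      simpa only [zero_mul] using hu.const_mul 0
    exact h.congr_ae (Lp.coeFn_zero _ _ _).symm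
  smul_mem' := by
    rintro c ⟨F, G⟩ ⟨u, u1, hu, hFu, hu0⟩
    refine ⟨_, _, (hu.const_mul c).congr_ae (Lp.coeFn_smul c G).symm,
      (Lp.coeFn_smul c F).trans (hFu.const_smul c), ?_⟩
    filter_upwards [hu0] with t hut
    simp only [hut, mul_zero, and_self]

theorem locallyIntegrable_coeFn (G : Lp ℂ 2 L.ρ) : LocallyIntegrable G L.ρ :=
  (Lp.memLp G).locallyIntegrable one_le_two

theorem mem_adjoint_minGraph {F G : Lp ℂ 2 L.ρ} (hu : L.Solves u u1 G) (hFu : F =ᵐ[L.ρ] u) :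
    (F, G) ∈ L.minGraph.adjoint := by
  rw [mem_adjoint_iff_inner_eq]
  rintro Y K ⟨y, y1, hy, hYy, hy0⟩
  rw [inner_eq_integral_mul_conj hFu .rfl, inner_eq_integral_mul_conj .rfl hYy]
  exact hu.integral_mul_conj_eq hy hy0
    (integrable_mul_conj ((Lp.memLp F).ae_eq hFu) (Lp.memLp K))
    (integrable_mul_conj (Lp.memLp G) ((Lp.memLp Y).ae_eq hYy))

theorem integral_mul_conj_eq_of_mem_adjoint {F G : Lp ℂ 2 L.ρ} (h : (F, G) ∈ L.minGraph.adjoint)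
    (hu : L.Solves u u1 G) (hy : L.Solves y y1 g)
    (hzero : ∀ᶠ x in cocompact ℝ, y x = 0 ∧ y1 x = 0) (hg : MemLp g 2 L.ρ)
    (hug : Integrable (fun t => u t * starRingEnd ℂ (g t)) L.ρ) :
    ∫ t, F t * starRingEnd ℂ (g t) ∂L.ρ = ∫ t, u t * starRingEnd ℂ (g t) ∂L.ρ := by
  have hyc : HasCompactSupport y := by
    rw [hasCompactSupport_iff_eventuallyEq, coclosedCompact_eq_cocompact]
    exact hzero.mono fun _ => And.left
  have hyL2 : MemLp y 2 L.ρ := hy.continuous.memLp_of_hasCompactSupport hyc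
  have hmem : (hyL2.toLp y, hg.toLp g) ∈ L.minGraph :=
    ⟨y, y1, hy.congr_ae hg.coeFn_toLp.symm, hyL2.coeFn_toLp, hzero⟩
  rw [← inner_eq_integral_mul_conj .rfl hg.coeFn_toLp, mem_adjoint_iff_inner_eq.1 h _ _ hmem,
    inner_eq_integral_mul_conj .rfl hyL2.coeFn_toLp, hu.integral_mul_conj_eq hy hzero hug
      (integrable_mul_conj (Lp.memLp G) hyL2)]

theorem setIntegral_sub_mul_conj_eq_zero {F G : Lp ℂ 2 L.ρ} (h : (F, G) ∈ L.minGraph.adjoint)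
    (hu : L.Solves u u1 G) (hθ : L.Solves θ θ1 fun _ => 0) (hφ : L.Solves φ φ1 fun _ => 0)
    (hθφ : ∀ x, Wr θ θ1 φ φ1 x = 1) {χ : ℝ → ℂ} (hχ : MemLp χ 2 (L.ρ.restrict (Ioc a b)))
    (hχθ : ∫ t in Ioc a b, χ t * θ t ∂L.ρ = 0) (hχφ : ∫ t in Ioc a b, χ t * φ t ∂L.ρ = 0) :
    ∫ t in Ioc a b, (F t - u t) * starRingEnd ℂ (χ t) ∂L.ρ = 0 := by
  have hg : MemLp ((Ioc a b).indicator χ) 2 L.ρ :=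
    (memLp_indicator_iff_restrict measurableSet_Ioc).2 hχ
  have hind (w : ℝ → ℂ) : (fun t => w t * starRingEnd ℂ ((Ioc a b).indicator χ t)) =
      (Ioc a b).indicator fun t => w t * starRingEnd ℂ (χ t) := by
    funext t
    by_cases ht : t ∈ Ioc a b <;> simp [ht]
  have hset (w : ℝ → ℂ) : ∫ t in Ioc a b, (Ioc a b).indicator χ t * w t ∂L.ρ =
      ∫ t in Ioc a b, χ t * w t ∂L.ρ :=
    setIntegral_congr_fun measurableSet_Ioc fun t ht => by rw [indicator_of_mem ht]
  obtain ⟨y, y1, hy, hy0⟩ := exists_solves_eventually_eq_zero (hg.locallyIntegrable one_le_two)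
    (fun t ht => indicator_of_notMem ht χ) hθ hφ hθφ ((hset θ).trans hχθ) ((hset φ).trans hχφ)
  have hFint := integrable_mul_conj ((Lp.memLp F).restrict (Ioc a b)) hχ
  have huint := integrable_mul_conj (memLp_two_restrict_Ioc_of_continuous hu.continuous a b) hχ
  have heq := integral_mul_conj_eq_of_mem_adjoint h hu hy hy0 hg <| by
    rwa [hind, integrable_indicator_iff measurableSet_Ioc]
  rw [hind, hind, integral_indicator measurableSet_Ioc, integral_indicator measurableSet_Ioc] at heq
  simp only [sub_mul]
  rw [integral_sub hFint huint, heq, sub_self]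

theorem exists_solves_ae_restrict_eq {F G : Lp ℂ 2 L.ρ} (h : (F, G) ∈ L.minGraph.adjoint)
    (a b : ℝ) : ∃ u u1, L.Solves u u1 G ∧ F =ᵐ[L.ρ.restrict (Ioc a b)] u := by
  obtain ⟨θ, θ1, φ, φ1, hθ, hφ, hθφ⟩ := exists_fundamental_system (L := L)
  obtain ⟨u, u1, hu, -⟩ := exists_solves (locallyIntegrable_coeFn G) a 0 0
  have hL2 {w : ℝ → ℂ} (hw : Continuous w) : MemLp w 2 (L.ρ.restrict (Ioc a b)) :=
    memLp_two_restrict_Ioc_of_continuous hw a b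
  have hFu := ((Lp.memLp F).restrict (Ioc a b)).sub (hL2 hu.continuous)
  have hθL2 := hL2 hθ.conj.continuous
  have hφL2 := hL2 hφ.conj.continuous
  obtain ⟨α, β, hαβ⟩ := exists_eq_smul_add_smul_of_forall_inner_eq_zero (𝕜 := ℂ)
    (a := hθL2.toLp _) (b := hφL2.toLp _) (f := hFu.toLp _) fun χ hχθ hχφ => by
      rw [inner_eq_integral_mul_conj .rfl (MemLp.coeFn_toLp _)] at hχθ hχφ
      simp only [Complex.conj_conj] at hχθ hχφ
      rw [inner_eq_integral_mul_conj hFu.coeFn_toLp .rfl]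
      exact setIntegral_sub_mul_conj_eq_zero h hu hθ hφ hθφ (Lp.memLp χ) hχθ hχφ
  refine ⟨_, _, ((hθ.conj.const_mul α).add (hφ.conj.const_mul β)).add hu |>.congr_ae ?_, ?_⟩
  · refine ae_of_all _ fun t => ?_
    simp only [map_zero, mul_zero, zero_add]
  · have hae := (hFu.coeFn_toLp.symm.trans (Lp.ext_iff.1 hαβ)).trans (Lp.coeFn_add _ _)
    filter_upwards [hae, Lp.coeFn_smul α (hθL2.toLp _), Lp.coeFn_smul β (hφL2.toLp _),
      hθL2.coeFn_toLp, hφL2.coeFn_toLp] with t ht hα hβ hθt hφt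
    simp only [Pi.sub_apply, Pi.add_apply, hα, hβ, Pi.smul_apply, hθt, hφt, smul_eq_mul] at ht
    rw [← ht, sub_add_cancel]

variable (L) in
/-- A pair which vanishes a.e. on large intervals with respect to the weight vanishes. -/
def LocallyDefinite : Prop :=
  ∀ x, ∃ N : ℕ, ∀ u u1 g, L.Solves u u1 g → u =ᵐ[L.ρ.restrict (Ioc (-N) N)] 0 → u x = 0 ∧ u1 x = 0

theorem mem_adjoint_minGraph_iff (hdef : L.LocallyDefinite) {F G : Lp ℂ 2 L.ρ} :
    (F, G) ∈ L.minGraph.adjoint ↔ ∃ u u1, L.Solves u u1 G ∧ F =ᵐ[L.ρ] u := by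
  refine ⟨fun h => ?_, fun ⟨u, u1, hu, hFu⟩ => mem_adjoint_minGraph hu hFu⟩
  obtain ⟨N, hN⟩ := hdef 0
  choose v v1 hv hFv using fun n : ℕ => exists_solves_ae_restrict_eq h (-n) n
  refine ⟨v N, v1 N, hv N, ae_of_forall_ae_restrict_Ioc fun n => ?_⟩
  wlog hn : N ≤ n generalizing n
  · have hle : (n : ℝ) ≤ N := Nat.cast_le.2 (le_of_not_ge hn)
    exact ae_restrict_of_ae_restrict_of_subset (Ioc_subset_Ioc (neg_le_neg hle) hle) (hFv N)
  have hle : (N : ℝ) ≤ n := Nat.cast_le.2 hn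
  have hFn : F =ᵐ[L.ρ.restrict (Ioc (-N) N)] v n :=
    ae_restrict_of_ae_restrict_of_subset (Ioc_subset_Ioc (neg_le_neg hle) hle) (hFv n)
  have hsub := (hv n).add ((hv N).const_mul (-1))
  obtain ⟨h0, h1⟩ := hN _ _ _ hsub <| by
    filter_upwards [hFn, hFv N] with t hn hN
    rw [← hn, ← hN, neg_one_mul, add_neg_cancel, Pi.zero_apply]
  rw [neg_one_mul, ← sub_eq_add_neg, sub_eq_zero] at h0 h1
  rw [← (hv n).eq_of_eq (hv N) h0 h1]
  exact hFv n

theorem eq_zero_of_zero_mem_adjoint_minGraph (hdef : L.LocallyDefinite) {G : Lp ℂ 2 L.ρ}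
    (h : (0, G) ∈ L.minGraph.adjoint) : G = 0 := by
  obtain ⟨u, u1, hu, h0u⟩ := (mem_adjoint_minGraph_iff hdef).1 h
  have hzero (x) : u x = 0 ∧ u1 x = 0 := by
    obtain ⟨N, hN⟩ := hdef x
    exact hN u u1 _ hu (ae_restrict_of_ae (h0u.symm.trans (Lp.coeFn_zero _ _ _)))
  have h1 : u1 = fun _ => 0 := funext fun x => (hzero x).2
  have hqr := (h1 ▸ hu.snd).ae_eq_zero
  rw [← L.ae_ρ] at hqr
  have hpos := L.pos_r
  rw [← L.ae_ρ] at hpos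
  refine Lp.eq_zero_iff_ae_eq_zero.2 ?_
  filter_upwards [hqr, hpos] with t ht hrt
  simpa only [(hzero t).1, mul_zero, zero_sub, Pi.zero_apply, neg_eq_zero, mul_eq_zero,
    Complex.ofReal_eq_zero, hrt.ne', false_or] using ht

theorem eq_zero_of_mem_adjoint_minGraph (hdef : L.LocallyDefinite)
    (hright : L.LimitPointOn (Ioi 0)) (hleft : L.LimitPointOn (Iic 0)) {z : ℂ} (hz : z.im ≠ 0)
    {f : Lp ℂ 2 L.ρ} (h : (f, z • f) ∈ L.minGraph.adjoint) : f = 0 := by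
  obtain ⟨u, u1, hu, hfu⟩ := (mem_adjoint_minGraph_iff hdef).1 h
  have hu : L.Solves u u1 fun t => z * u t :=
    hu.congr_ae ((Lp.coeFn_smul z f).trans (hfu.const_smul z))
  have hint : Integrable (fun t => ‖u t‖ ^ 2) L.ρ :=
    (memLp_two_iff_integrable_sq_norm hu.continuous.aestronglyMeasurable).1
      ((Lp.memLp f).ae_eq hfu)
  exact Lp.eq_zero_iff_ae_eq_zero.2 (hfu.trans (hu.ae_eq_zero_of_limitPointOn hz hint hright hleft))

theorem exists_isSelfAdjoint (hdef : L.LocallyDefinite) (hright : L.LimitPointOn (Ioi 0))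
    (hleft : L.LimitPointOn (Iic 0)) :
    ∃ S : Lp ℂ 2 L.ρ →ₗ.[ℂ] Lp ℂ 2 L.ρ, Dense (S.domain : Set (Lp ℂ 2 L.ρ)) ∧ IsSelfAdjoint S ∧
      ∀ F G : Lp ℂ 2 L.ρ, (F, G) ∈ S.graph ↔ ∃ u u1, L.Solves u u1 G ∧ F =ᵐ[L.ρ] u := by
  obtain ⟨S, hdense, hself, hgraph⟩ := exists_isSelfAdjoint_graph_eq_adjoint (Γ₀ := L.minGraph)
    (fun _ ⟨_, _, hu, hFu, _⟩ => mem_adjoint_minGraph hu hFu)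
    (fun _ => eq_zero_of_zero_mem_adjoint_minGraph hdef)
    (fun _ => eq_zero_of_mem_adjoint_minGraph hdef hright hleft (by simp))
    (fun _ => eq_zero_of_mem_adjoint_minGraph hdef hright hleft (by simp))
  exact ⟨S, hdense, hself, fun F G => by rw [hgraph, mem_adjoint_minGraph_iff hdef]⟩

end SturmLiouville

/-! ### Time scales -/

/-- `μ` is the Lebesgue–Stieltjes measure `dσ` of the forward shift of `T`. -/
def IsSigmaMeasure (T : Set ℝ) (μ : Measure ℝ) : Prop :=
  ∀ c d, c ≤ d → μ (Ioc c d) = ENNReal.ofReal (tsSigma T d - tsSigma T c)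

/-- `ν` is the Lebesgue–Stieltjes measure `dρ` of the (left-continuous) backward shift of `T`. -/
def IsRhoMeasure (T : Set ℝ) (ν : Measure ℝ) : Prop :=
  ∀ c d, c ≤ d → ν (Ico c d) = ENNReal.ofReal (tsRho T d - tsRho T c)

theorem IsSigmaMeasure.isLocallyFiniteMeasure {T : Set ℝ} {μ : Measure ℝ}
    (hμ : IsSigmaMeasure T μ) : IsLocallyFiniteMeasure μ where
  finiteAtNhds x := ⟨Ioc (x - 1) (x + 1), Ioc_mem_nhds (sub_one_lt x) (lt_add_one x), by
    rw [hμ _ _ (by linarith)]; exact ENNReal.ofReal_lt_top⟩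

theorem IsRhoMeasure.isLocallyFiniteMeasure {T : Set ℝ} {ν : Measure ℝ}
    (hν : IsRhoMeasure T ν) : IsLocallyFiniteMeasure ν where
  finiteAtNhds x := ⟨Ico (x - 1) (x + 1), Ico_mem_nhds (sub_one_lt x) (lt_add_one x), by
    rw [hν _ _ (by linarith)]; exact ENNReal.ofReal_lt_top⟩

/-- The least point of the time scale `T` which is `≥ t`. It retracts `ℝ` onto `T` and turns
functions on `T` into their extensions to `ℝ`. -/
noncomputable def tsCeil (T : Set ℝ) (t : ℝ) : ℝ := sInf {s | s ∈ T ∧ t ≤ s}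

theorem tsCeil_le {T : Set ℝ} {s t : ℝ} (hs : s ∈ T) (hts : t ≤ s) : tsCeil T t ≤ s :=
  csInf_le ⟨t, fun _ h => h.2⟩ ⟨hs, hts⟩

/-- A closed time scale which is unbounded in both directions. -/
structure IsUnboundedTimeScale (T : Set ℝ) : Prop where
  isClosed : IsClosed T
  not_bddAbove : ¬BddAbove T
  not_bddBelow : ¬BddBelow T

namespace IsUnboundedTimeScale

variable {T : Set ℝ} {d s t x : ℝ}

theorem exists_gt (hT : IsUnboundedTimeScale T) (x : ℝ) : ∃ s ∈ T, x < s :=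
  not_bddAbove_iff.1 hT.not_bddAbove x

theorem exists_lt (hT : IsUnboundedTimeScale T) (x : ℝ) : ∃ s ∈ T, s < x :=
  not_bddBelow_iff.1 hT.not_bddBelow x

theorem tsKappa_eq (hT : IsUnboundedTimeScale T) : tsKappa T = T :=
  if_neg fun h => hT.not_bddBelow h.1

theorem tsSigma_eq (hT : IsUnboundedTimeScale T) (t : ℝ) :
    tsSigma T t = sInf {s | s ∈ T ∧ t < s} :=
  if_pos (hT.exists_gt t)

theorem tsRho_eq (hT : IsUnboundedTimeScale T) (t : ℝ) :
    tsRho T t = sSup {s | s ∈ T ∧ s < t} :=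
  if_pos (hT.exists_lt t)

theorem tsSigma_le (hT : IsUnboundedTimeScale T) (hs : s ∈ T) (hts : t < s) : tsSigma T t ≤ s := by
  rw [hT.tsSigma_eq]
  exact csInf_le ⟨t, fun _ h => h.2.le⟩ ⟨hs, hts⟩

theorem le_tsSigma (hT : IsUnboundedTimeScale T) (t : ℝ) : t ≤ tsSigma T t := by
  rw [hT.tsSigma_eq]
  exact le_csInf (hT.exists_gt t) fun _ h => h.2.le

theorem le_tsRho (hT : IsUnboundedTimeScale T) (hs : s ∈ T) (hst : s < t) : s ≤ tsRho T t := by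
  rw [hT.tsRho_eq]
  exact le_csSup ⟨t, fun _ h => h.2.le⟩ ⟨hs, hst⟩

theorem tsRho_le (hT : IsUnboundedTimeScale T) (t : ℝ) : tsRho T t ≤ t := by
  rw [hT.tsRho_eq]
  exact csSup_le (hT.exists_lt t) fun _ h => h.2.le

theorem tsRho_mem (hT : IsUnboundedTimeScale T) (t : ℝ) : tsRho T t ∈ T := by
  rw [hT.tsRho_eq]
  exact closure_minimal (fun _ => And.left) hT.isClosed
    (csSup_mem_closure (hT.exists_lt t) ⟨t, fun _ h => h.2.le⟩)

theorem tsCeil_mem_and_le (hT : IsUnboundedTimeScale T) (t : ℝ) :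
    tsCeil T t ∈ T ∧ t ≤ tsCeil T t := by
  obtain ⟨s, hs, hts⟩ := hT.exists_gt t
  exact (hT.isClosed.inter isClosed_Ici).csInf_mem ⟨s, hs, hts.le⟩ ⟨t, fun _ h => h.2⟩

theorem tsCeil_mem (hT : IsUnboundedTimeScale T) (t : ℝ) : tsCeil T t ∈ T :=
  (hT.tsCeil_mem_and_le t).1

theorem le_tsCeil (hT : IsUnboundedTimeScale T) (t : ℝ) : t ≤ tsCeil T t :=
  (hT.tsCeil_mem_and_le t).2

theorem monotone_tsCeil (hT : IsUnboundedTimeScale T) : Monotone (tsCeil T) := fun _ y hxy =>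
  tsCeil_le (hT.tsCeil_mem y) (hxy.trans (hT.le_tsCeil y))

theorem tsCeil_lt_of_lt_tsRho (hT : IsUnboundedTimeScale T) (h : t < tsRho T d) :
    tsCeil T t < d := by
  rw [hT.tsRho_eq] at h
  obtain ⟨s, ⟨hs, hsd⟩, hts⟩ := exists_lt_of_lt_csSup (hT.exists_lt d) h
  exact (tsCeil_le hs hts.le).trans_lt hsd

theorem le_tsRho_of_tsCeil_lt (hT : IsUnboundedTimeScale T) (h : tsCeil T t < d) :
    t ≤ tsRho T d :=
  (hT.le_tsCeil t).trans (hT.le_tsRho (hT.tsCeil_mem t) h)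

theorem tsCeil_le_of_tsRho_lt (hT : IsUnboundedTimeScale T) (hs : s ∈ T) (hxs : tsRho T x < s) :
    tsCeil T x ≤ s :=
  tsCeil_le hs (le_of_not_gt fun hsx => hxs.not_ge (hT.le_tsRho hs hsx))

theorem extK_eq (hT : IsUnboundedTimeScale T) (p : ℝ → ℂ) (t : ℝ) :
    extK T p t = p (tsCeil T t) := by
  rw [extK, hT.tsKappa_eq]
  split_ifs with ht
  · rw [(tsCeil_le ht le_rfl).antisymm (hT.le_tsCeil t)]
  · have hne {s} (hs : s ∈ T) : t ≠ s := fun h => ht (h ▸ hs)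
    congr 1
    refine le_antisymm ?_ ?_
    · exact hT.tsSigma_le (hT.tsCeil_mem t) ((hT.le_tsCeil t).lt_of_ne (hne (hT.tsCeil_mem t)))
    · rw [hT.tsSigma_eq]
      exact le_csInf (hT.exists_gt t) fun s hs => tsCeil_le hs.1 hs.2.le

theorem locallyIntegrable_comp_tsCeil (hT : IsUnboundedTimeScale T) {f : ℝ → ℝ}
    (hf : LocallyIntegrable f (Measure.map (tsCeil T) volume)) :
    LocallyIntegrable (fun t => f (tsCeil T t)) := by
  refine locallyIntegrable_of_integrableOn_Icc fun a b => ?_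
  have hmono := hT.monotone_tsCeil
  have hint := hf.integrableOn_isCompact (isCompact_Icc (a := tsCeil T a) (b := tsCeil T b))
  rw [IntegrableOn, Measure.restrict_map hmono.measurable measurableSet_Icc] at hint
  exact IntegrableOn.mono_set (hint.comp_measurable hmono.measurable)
    fun x hx => ⟨hmono hx.1, hmono hx.2⟩

end IsUnboundedTimeScale

theorem IsRhoMeasure.eq_map_tsCeil {T : Set ℝ} {ν : Measure ℝ} (hν : IsRhoMeasure T ν)
    (hT : IsUnboundedTimeScale T) : ν = Measure.map (tsCeil T) volume := by
  have := hν.isLocallyFiniteMeasure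
  refine Measure.ext_of_Ico _ _ fun c d hcd => ?_
  rw [hν c d hcd.le, Measure.map_apply hT.monotone_tsCeil.measurable measurableSet_Ico]
  refine le_antisymm ?_ ?_
  · rw [← Real.volume_Ioo]
    refine measure_mono fun t ht => ⟨?_, hT.tsCeil_lt_of_lt_tsRho ht.2⟩
    exact le_of_not_gt fun h => ht.1.not_ge (hT.le_tsRho_of_tsCeil_lt h)
  · rw [← Real.volume_Icc]
    refine measure_mono fun t ht => ⟨?_, hT.le_tsRho_of_tsCeil_lt ht.2⟩
    exact le_of_not_gt fun h => ht.1.not_gt (hT.tsCeil_lt_of_lt_tsRho h)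

namespace IsSigmaMeasure

variable {T : Set ℝ} {μ : Measure ℝ} {a b t : ℝ}

theorem measure_Ioc_eq_zero (hμ : IsSigmaMeasure T μ)
    (hT : IsUnboundedTimeScale T) (h : ∀ s ∈ T, a < s → b < s) : μ (Ioc a b) = 0 := by
  rcases lt_or_ge b a with hba | hab
  · rw [Ioc_eq_empty_of_le hba.le, measure_empty]
  · rw [hμ a b hab, ENNReal.ofReal_eq_zero, sub_nonpos, hT.tsSigma_eq a]
    exact le_csInf (hT.exists_gt a) fun s hs => hT.tsSigma_le hs.1 (h s hs.1 hs.2)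

theorem measure_compl (hμ : IsSigmaMeasure T μ)
    (hT : IsUnboundedTimeScale T) : μ Tᶜ = 0 := by
  refine measure_null_of_locally_null _ fun x hx => ?_
  obtain ⟨ε, hε, hball⟩ := Metric.isOpen_iff.1 hT.isClosed.isOpen_compl x hx
  rw [Real.ball_eq_Ioo] at hball
  refine ⟨Ioc (x - ε / 2) (x + ε / 2), mem_nhdsWithin_of_mem_nhds
    (Ioc_mem_nhds (by linarith) (by linarith)), hμ.measure_Ioc_eq_zero hT fun s hs h1 => ?_⟩
  by_contra! h2
  exact hball ⟨by linarith, by linarith⟩ hs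

theorem measure_Ioc_ne_zero (hμ : IsSigmaMeasure T μ)
    (hT : IsUnboundedTimeScale T) (ht : t ∈ T) (hat : a < t) (htb : t < b) : μ (Ioc a b) ≠ 0 := by
  rw [hμ a b (hat.trans htb).le, ENNReal.ofReal_ne_zero_iff, sub_pos]
  exact (hT.tsSigma_le ht hat).trans_lt (htb.trans_le (hT.le_tsSigma b))

theorem eq_zero_of_ae_restrict_eq_zero (hμ : IsSigmaMeasure T μ)
    (hT : IsUnboundedTimeScale T) {u : ℝ → ℂ} (hu : Continuous u)
    (hzero : u =ᵐ[μ.restrict (Ioc a b)] 0) (ht : t ∈ T) (htab : t ∈ Ioo a b) : u t = 0 := by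
  by_contra hne
  obtain ⟨ε, hε, hball⟩ := Metric.isOpen_iff.1
    ((isOpen_ne_fun hu continuous_const).inter isOpen_Ioo) t ⟨hne, htab⟩
  rw [Real.ball_eq_Ioo] at hball
  have hsub : Ioc (t - ε / 2) (t + ε / 2) ⊆ {x | u x ≠ 0} ∩ Ioo a b := fun x hx =>
    hball ⟨by linarith [hx.1], by linarith [hx.2]⟩
  refine hμ.measure_Ioc_ne_zero hT ht (a := t - ε / 2) (b := t + ε / 2) (by linarith)
    (by linarith) (measure_mono_null ?_ ((ae_restrict_iff' measurableSet_Ioc).1 hzero))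
  exact fun x hx hx0 => (hsub hx).1 (hx0 (Ioo_subset_Ioc_self (hsub hx).2))

end IsSigmaMeasure

section Gap

variable {E : Type*} [NormedAddCommGroup E] [NormedSpace ℝ E] {f F : ℝ → E} {a b : ℝ}

theorem IsIndefiniteIntegral.eqOn_zero_of_eqOn_const [CompleteSpace E]
    (hF : IsIndefiniteIntegral volume f F) {k : E} (hf : ∀ t ∈ Ioo a b, f t = k) (ha : F a = 0)
    (hb : F b = 0) : EqOn F 0 (Icc a b) := by
  have haffine : ∀ y ∈ Icc a b, F y = (y - a) • k := fun y hy => by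
    rw [hF.eq_add a, ha, zero_add, ← intervalIntegral.integral_const,
      intervalIntegral.integral_of_le hy.1, intervalIntegral.integral_of_le hy.1,
      integral_Ioc_eq_integral_Ioo, integral_Ioc_eq_integral_Ioo]
    exact setIntegral_congr_fun measurableSet_Ioo fun t ht => hf t ⟨ht.1, ht.2.trans_le hy.2⟩
  intro y hy
  have hk := haffine b ⟨hy.1.trans hy.2, le_rfl⟩
  rw [hb, eq_comm, smul_eq_zero, sub_eq_zero] at hk
  rw [haffine y hy, Pi.zero_apply, smul_eq_zero, sub_eq_zero]
  exact hk.imp_left fun hba => le_antisymm (hy.2.trans_eq hba) hy.1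

theorem eqOn_zero_Ico_of_ae_restrict_eq_zero {X : Type*} [TopologicalSpace X] [T1Space X] [Zero X]
    {F : ℝ → X} (hF : ∀ x, ContinuousWithinAt F (Ici x) x)
    (hzero : ∀ᵐ t ∂volume.restrict (Ioc a b), F t = 0) : EqOn F 0 (Ico a b) := by
  intro x hx
  by_contra hne
  have hev : ∀ᶠ y in nhdsWithin x (Ici x), F y ≠ 0 := (hF x).eventually_ne hne
  obtain ⟨c, hxc, hc⟩ := (mem_nhdsGE_iff_exists_Ico_subset).1
    (hev.and (Ico_mem_nhdsGE hx.2))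
  have hpos : (0 : ℝ≥0∞) < volume (Ioo x c) := by
    rw [Real.volume_Ioo, ENNReal.ofReal_pos]
    exact sub_pos.2 hxc
  refine hpos.ne' (measure_mono_null ?_ ((ae_restrict_iff' measurableSet_Ioc).1 hzero))
  intro y hy hy0
  have hyc := hc (Ioo_subset_Ico_self hy)
  exact hyc.1 (hy0 ⟨hx.1.trans_lt hy.1, hyc.2.2.le⟩)

end Gap

theorem continuous_of_eq_add_integral {E : Type*} [NormedAddCommGroup E] [NormedSpace ℝ E]
    {u f : ℝ → E} (h : ∀ c x, c ≤ x → u x = u c + ∫ t in c..x, f t) : Continuous u := by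
  by_cases hf : ∀ a b, IntervalIntegrable f volume a b
  · have hu : u = fun x => u 0 + ∫ t in (0 : ℝ)..x, f t := by
      funext x
      rcases le_total 0 x with hx | hx
      · exact h 0 x hx
      · rw [intervalIntegral.integral_symm, h x 0 hx, add_neg_cancel_right]
    rw [hu]
    exact continuous_const.add (intervalIntegral.continuous_primitive hf 0)
  -- A single divergent integral makes `u` constant, since divergent integrals are `0`.
  obtain ⟨a, b, hab⟩ : ∃ a b, ¬IntervalIntegrable f volume a b := by push Not at hf; exact hf
  have heq (c x) (hcx : c ≤ x) (hni : ¬IntervalIntegrable f volume c x) : u x = u c := by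
    rw [h c x hcx, intervalIntegral.integral_undef hni, add_zero]
  have hconst {c d x} (hsub : uIcc a b ⊆ Icc c d) (hx : x ∈ Icc c d) : u x = u c := by
    have hcd : c ≤ d := hx.1.trans hx.2
    have hni : ¬IntervalIntegrable f volume c d := fun hi =>
      hab (hi.mono_set (by rwa [uIcc_of_le hcd]))
    by_cases hcx : IntervalIntegrable f volume c x
    · rw [← heq x d hx.2 fun hxd => hni (hcx.trans hxd), heq c d hcd hni]
    · exact heq c x hx.1 hcx
  refine continuous_of_const fun x y => ?_
  have hbdd : uIcc a b ∪ uIcc x y ⊆ Icc (min (min a b) (min x y)) (max (max a b) (max x y)) :=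
    union_subset (Icc_subset_Icc (min_le_left _ _) (le_max_left _ _))
      (Icc_subset_Icc (min_le_right _ _) (le_max_right _ _))
  have hsub := subset_union_left.trans hbdd
  rw [hconst hsub (hbdd (.inr left_mem_uIcc)), hconst hsub (hbdd (.inr right_mem_uIcc))]

theorem isIndefiniteIntegral_iff {E : Type*} [NormedAddCommGroup E] [NormedSpace ℝ E]
    {μ : Measure ℝ} {f F : ℝ → E} (hf : LocallyIntegrable f μ) :
    IsIndefiniteIntegral μ f F ↔ ∀ c x, c ≤ x → F x = F c + ∫ t in Ioc c x, f t ∂μ := by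
  refine ⟨fun h c x hcx => by rw [h.eq_add c, intervalIntegral.integral_of_le hcx],
    fun h => ⟨hf, fun c x => ?_⟩⟩
  rcases le_total c x with hcx | hxc
  · rw [h c x hcx, intervalIntegral.integral_of_le hcx, add_sub_cancel_left]
  · rw [h x c hxc, intervalIntegral.integral_of_ge hxc, sub_add_cancel_left]

theorem isPair_iff_isSLPair {T : Set ℝ} {μ : Measure ℝ} {p : ℝ → ℂ} {w : ℝ → ℝ}
    {u u1 h : ℝ → ℂ} (hw : LocallyIntegrable w) (hp : ∀ t, (extK T p t)⁻¹ = w t)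
    (hh : LocallyIntegrable h μ) : IsPair T μ p u u1 h ↔ IsSLPair w μ u u1 h := by
  have hfst (c x) (hcx : c ≤ x) :
      ∫ t in c..x, u1 t / extK T p t = ∫ t in Ioc c x, u1 t * w t := by
    simp only [intervalIntegral.integral_of_le hcx, div_eq_mul_inv, hp]
  constructor
  · intro hu
    have hsnd := (isIndefiniteIntegral_iff hh).2 fun c x hcx => (hu c x hcx).2
    refine ⟨(isIndefiniteIntegral_iff (hsnd.locallyIntegrable_mul (locallyIntegrable_ofReal hw))).2
      fun c x hcx => ?_, hsnd⟩
    rw [(hu c x hcx).1, hfst c x hcx]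
  · intro hu c x hcx
    rw [hfst c x hcx]
    exact ⟨(isIndefiniteIntegral_iff hu.fst.locallyIntegrable).1 hu.fst c x hcx,
      (isIndefiniteIntegral_iff hh).1 hu.snd c x hcx⟩

section SqWeight

variable {μ : Measure ℝ} {r : ℝ → ℝ} {u : ℝ → ℂ} {s : Set ℝ}

theorem lintegral_sqWeight_lt_top (hr : AEMeasurable r μ)
    (hu : Integrable (fun t => ‖u t‖ ^ 2) (μ.withDensity fun t => ENNReal.ofReal (r t))) :
    ∫⁻ t, sqWeight r u t ∂μ < ∞ := by
  have hfin := hu.hasFiniteIntegral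
  rw [HasFiniteIntegral, lintegral_withDensity_eq_lintegral_mul₀' hr.ennreal_ofReal
    hu.aestronglyMeasurable.enorm] at hfin
  refine (lintegral_congr fun t => ?_).trans_lt hfin
  rw [sqWeight, Pi.mul_apply, mul_comm, enorm_pow, enorm_norm, enorm_eq_nnnorm]

theorem setLIntegral_sqWeight_lt_top (hr : AEMeasurable r μ) (hs : MeasurableSet s)
    (hu : IntegrableOn (fun t => ‖u t‖ ^ 2) s (μ.withDensity fun t => ENNReal.ofReal (r t))) :
    ∫⁻ t in s, sqWeight r u t ∂μ < ∞ := by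
  rw [IntegrableOn, restrict_withDensity hs] at hu
  exact lintegral_sqWeight_lt_top hr.restrict hu

theorem integrableOn_Icc_norm_sq_withDensity (hr : LocallyIntegrable r μ) (hu : Continuous u)
    (a b : ℝ) :
    IntegrableOn (fun t => ‖u t‖ ^ 2) (Icc a b) (μ.withDensity fun t => ENNReal.ofReal (r t)) :=
  have := isLocallyFiniteMeasure_withDensity_ofReal hr
  (hu.norm.pow 2).locallyIntegrable.integrableOn_isCompact isCompact_Icc

end SqWeight

section LimitPoint

variable {T : Set ℝ} {μ : Measure ℝ} {p r q : ℝ → ℝ}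

theorem not_bddAbove_of_limitPointRight (hr : LocallyIntegrable r μ)
    (h : LimitPointRight T μ p r q) : ¬BddAbove T := by
  rintro ⟨b, hb⟩
  obtain ⟨u, u1, hu, hL2⟩ := h 0
  have hcont : Continuous u := continuous_of_eq_add_integral fun c x hcx => (hu c x hcx).1
  refine hL2 fun c _ => (lintegral_mono_set ?_).trans_lt <|
    setLIntegral_sqWeight_lt_top hr.aestronglyMeasurable.aemeasurable measurableSet_Icc
      (integrableOn_Icc_norm_sq_withDensity hr hcont c b)
  rintro t ⟨⟨hct, s, hs, hts⟩, -⟩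
  exact ⟨hct, hts.le.trans (hb hs)⟩

theorem not_bddBelow_of_limitPointLeft (hr : LocallyIntegrable r μ)
    (h : LimitPointLeft T μ p r q) : ¬BddBelow T := by
  rintro ⟨a, ha⟩
  obtain ⟨u, u1, hu, hL2⟩ := h 0
  have hcont : Continuous u := continuous_of_eq_add_integral fun c x hcx => (hu c x hcx).1
  refine hL2 fun c _ => (lintegral_mono_set ?_).trans_lt <|
    setLIntegral_sqWeight_lt_top hr.aestronglyMeasurable.aemeasurable measurableSet_Icc
      (integrableOn_Icc_norm_sq_withDensity hr hcont a c)
  rintro t ⟨⟨⟨s, hs, hst⟩, htc⟩, -⟩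
  exact ⟨(ha hs).trans hst.le, htc⟩

end LimitPoint

section Uniqueness

variable {T : Set ℝ} {μ : Measure ℝ} {f w : ℝ → ℝ} {u u1 h : ℝ → ℂ} {s t x : ℝ}

theorem IsSLPair.eq_zero_of_endpoints (hu : IsSLPair w μ u u1 h) (hT : IsUnboundedTimeScale T)
    (hμ : IsSigmaMeasure T μ) (hw : ∀ y, w y = f (tsCeil T y)) (hρ : u (tsRho T x) = 0)
    (hceil : u (tsCeil T x) = 0) : u x = 0 := by
  refine hu.fst.eqOn_zero_of_eqOn_const (k := u1 (tsRho T x) * f (tsCeil T x)) (fun y hy => ?_)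
    hρ hceil ⟨hT.tsRho_le x, hT.le_tsCeil x⟩
  have hu1 : u1 y = u1 (tsRho T x) := by
    rw [hu.snd.eq_add (tsRho T x), intervalIntegral.integral_of_le hy.1.le,
      setIntegral_measure_zero, add_zero]
    exact hμ.measure_Ioc_eq_zero hT fun s hs hxs => hy.2.trans_le (hT.tsCeil_le_of_tsRho_lt hs hxs)
  have hceil_eq : tsCeil T y = tsCeil T x := (tsCeil_le (hT.tsCeil_mem x) hy.2.le).antisymm
    (hT.tsCeil_le_of_tsRho_lt (hT.tsCeil_mem y) (hy.1.trans_le (hT.le_tsCeil y)))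
  rw [hu1, hw, hceil_eq]

theorem IsSLPair.eqOn_zero_Icc (hu : IsSLPair w μ u u1 h) (hT : IsUnboundedTimeScale T)
    (hμ : IsSigmaMeasure T μ) (hw : ∀ y, w y = f (tsCeil T y)) (hs : s ∈ T) (ht : t ∈ T)
    (hzero : ∀ y ∈ T ∩ Icc s t, u y = 0) : EqOn u 0 (Icc s t) := by
  intro x hx
  rcases hx.1.eq_or_lt with rfl | hsx
  · exact hzero s ⟨hs, hx⟩
  · refine hu.eq_zero_of_endpoints hT hμ hw (hzero _ ⟨hT.tsRho_mem x, hT.le_tsRho hs hsx, ?_⟩)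
      (hzero _ ⟨hT.tsCeil_mem x, ?_, tsCeil_le ht hx.2⟩)
    · exact (hT.tsRho_le x).trans hx.2
    · exact hx.1.trans (hT.le_tsCeil x)

theorem IsSLPair.snd_eqOn_zero_Ico [IsLocallyFiniteMeasure μ] (hu : IsSLPair w μ u u1 h)
    (hw : ∀ᵐ t, w t ≠ 0) (hzero : EqOn u 0 (Icc s t)) : EqOn u1 0 (Ico s t) := by
  refine eqOn_zero_Ico_of_ae_restrict_eq_zero hu.snd.continuousWithinAt_Ici ?_
  rcases lt_or_ge t s with hts | hst
  · simp [Ioc_eq_empty_of_le hts.le]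
  have hprod := hu.fst.ae_restrict_eq_zero fun x hx =>
    (hzero hx).trans (hzero (left_mem_Icc.2 hst)).symm
  filter_upwards [hprod, ae_restrict_of_ae hw] with y hy hwy
  exact (mul_eq_zero.1 hy).resolve_right (Complex.ofReal_ne_zero.2 hwy)

end Uniqueness

namespace SturmLiouville

variable {L : SturmLiouville} {T : Set ℝ} {p : ℝ → ℝ}

theorem locallyDefinite {f : ℝ → ℝ} (hT : IsUnboundedTimeScale T) (hμ : IsSigmaMeasure T L.μ)
    (hw : ∀ t, L.w t = f (tsCeil T t)) (hne : ∀ᵐ t, L.w t ≠ 0) : L.LocallyDefinite := by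
  intro x
  obtain ⟨s, hs, hsx⟩ := hT.exists_lt x
  obtain ⟨t, ht, hxt⟩ := hT.exists_gt x
  obtain ⟨N, hN⟩ := exists_nat_gt (max |s| |t|)
  obtain ⟨hsN, htN⟩ := max_lt_iff.1 hN
  refine ⟨N, fun u u1 g hu hzero => ?_⟩
  rw [EventuallyEq, ae_restrict_iff' measurableSet_Ioc, L.ae_ρ,
    ← ae_restrict_iff' measurableSet_Ioc] at hzero
  have hu0 : EqOn u 0 (Icc s t) := hu.eqOn_zero_Icc hT hμ hw hs ht fun y hy =>
    hμ.eq_zero_of_ae_restrict_eq_zero hT hu.continuous hzero hy.1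
      ⟨(abs_lt.1 hsN).1.trans_le hy.2.1, hy.2.2.trans_lt (abs_lt.1 htN).2⟩
  exact ⟨hu0 ⟨hsx.le, hxt.le⟩, hu.snd_eqOn_zero_Ico hne hu0 ⟨hsx.le, hxt⟩⟩

theorem solves_of_isSLSol (hp : ∀ t, (extK T (cR p) t)⁻¹ = L.w t) {z : ℂ} {u u1 : ℝ → ℂ}
    (hu : IsSLSol T L.μ (cR p) (cR L.r) (cR L.q) z 0 u u1) :
    L.Solves u u1 fun t => z * u t := by
  have hcont : Continuous u := continuous_of_eq_add_integral fun c x hcx => (hu c x hcx).1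
  have hdensity : (fun t => (cR L.q t - z * cR L.r t) * u t - cR L.r t * (0 : ℝ → ℂ) t) =
      fun t => L.q t * u t - L.r t * (z * u t) := by
    funext t
    simp only [cR, Pi.zero_apply]
    ring
  have hloc : LocallyIntegrable (fun t => L.q t * u t - L.r t * (z * u t)) L.μ :=
    ((locallyIntegrable_ofReal L.locallyIntegrable_q).mul_continuous hcont).sub
      ((locallyIntegrable_ofReal L.locallyIntegrable_r).mul_continuous
        (continuous_const.mul hcont))
  rw [IsSLSol, hdensity] at hu
  exact (isPair_iff_isSLPair L.locallyIntegrable_w hp hloc).1 hu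

theorem limitPointOn_Ioi (hp : ∀ t, (extK T (cR p) t)⁻¹ = L.w t)
    (h : LimitPointRight T L.μ p L.r L.q) : L.LimitPointOn (Ioi 0) := by
  intro z
  obtain ⟨v, v1, hv, hL2⟩ := h z
  have hsolves := solves_of_isSLSol hp hv
  refine ⟨v, v1, hsolves, fun hint => hL2 fun c _ => (lintegral_mono_set ?_).trans_lt <|
    setLIntegral_sqWeight_lt_top L.aemeasurable_r (measurableSet_Icc.union measurableSet_Ioi)
      ((integrableOn_Icc_norm_sq_withDensity L.locallyIntegrable_r hsolves.continuous c 0).union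
        hint)⟩
  exact fun t ht => (le_or_gt t 0).imp_left fun h0 => ⟨ht.1.1, h0⟩

theorem limitPointOn_Iic (hp : ∀ t, (extK T (cR p) t)⁻¹ = L.w t)
    (h : LimitPointLeft T L.μ p L.r L.q) : L.LimitPointOn (Iic 0) := by
  intro z
  obtain ⟨v, v1, hv, hL2⟩ := h z
  have hsolves := solves_of_isSLSol hp hv
  refine ⟨v, v1, hsolves, fun hint => hL2 fun c _ => (lintegral_mono_set ?_).trans_lt <|
    setLIntegral_sqWeight_lt_top L.aemeasurable_r (measurableSet_Icc.union measurableSet_Iic)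
      ((integrableOn_Icc_norm_sq_withDensity L.locallyIntegrable_r hsolves.continuous 0 c).union
        hint)⟩
  exact fun t ht => (le_or_gt t 0).symm.imp_left fun h0 => ⟨h0.le, ht.1.2⟩

theorem memL2T_of_ae_eq {F : Lp ℂ 2 L.ρ} {u : ℝ → ℂ} (hu : F =ᵐ[L.ρ] u) : MemL2T T L.μ L.r u := by
  have hmem : MemLp u 2 L.ρ := (Lp.memLp F).ae_eq hu
  exact (setLIntegral_le_lintegral _ _).trans_lt (lintegral_sqWeight_lt_top L.aemeasurable_r
    ((memLp_two_iff_integrable_sq_norm hmem.aestronglyMeasurable).1 hmem))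

theorem ae_eq_ellApply_iff {u h G : ℝ → ℂ} :
    (∀ᵐ t ∂L.ρ, G t = ellApply L.r L.q h u t) ↔
      h =ᵐ[L.μ] fun t => L.q t * u t - L.r t * G t := by
  rw [L.ae_ρ]
  refine eventually_congr (L.pos_r.mono fun t ht => ?_)
  have hr : (L.r t : ℂ) ≠ 0 := Complex.ofReal_ne_zero.2 ht.ne'
  rw [ellApply, eq_div_iff hr]
  constructor <;> intro hG <;> linear_combination hG

theorem exists_solves_iff_exists_memD2 (hp : ∀ t, (extK T (cR p) t)⁻¹ = L.w t)
    {F G : Lp ℂ 2 L.ρ} :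
    (∃ u u1, L.Solves u u1 G ∧ F =ᵐ[L.ρ] u) ↔
      ∃ u u1 h, MemD2 T L.μ p L.r L.q u u1 h ∧ (∀ᵐ t ∂L.ρ, F t = u t) ∧
        ∀ᵐ t ∂L.ρ, G t = ellApply L.r L.q h u t := by
  constructor
  · rintro ⟨u, u1, hu, hFu⟩
    have hG := ae_eq_ellApply_iff.2 (.refl _ fun t => L.q t * u t - L.r t * G t)
    have hh := hu.snd.locallyIntegrable
    exact ⟨u, u1, _, ⟨hh, (isPair_iff_isSLPair L.locallyIntegrable_w hp hh).2 hu,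
      memL2T_of_ae_eq hFu, memL2T_of_ae_eq hG⟩, hFu, hG⟩
  · rintro ⟨u, u1, h, ⟨hh, hu, -, -⟩, hFu, hG⟩
    obtain ⟨hfst, hsnd⟩ := (isPair_iff_isSLPair L.locallyIntegrable_w hp hh).1 hu
    exact ⟨u, u1, ⟨hfst, hsnd.congr_ae (ae_eq_ellApply_iff.1 hG)⟩, hFu⟩

end SturmLiouville

theorem IsUnboundedTimeScale.wM_eq {T : Set ℝ} {μ : Measure ℝ} (hT : IsUnboundedTimeScale T)
    (hμ : IsSigmaMeasure T μ) (r : ℝ → ℝ) :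
    wM T μ r = μ.withDensity fun t => ENNReal.ofReal (r t) := by
  rw [wM, hT.tsKappa_eq, Measure.restrict_eq_self_of_ae_mem (hμ.measure_compl hT)]

/-- If `ℓ` is in the limit-point case at both endpoints, then the maximal operator `S` in
`L²(𝕋_κ; r dσ_κ)`, acting by `S[u] = [ℓu]` on all classes having a representative pair in
`D_ℓ²`, is well defined, densely defined and self-adjoint. -/
theorem selfadjoint_limit_point_both_endpoints
    (T : Set ℝ) (hne : T.Nonempty) (hcl : IsClosed T)
    (hfive : ∃ s : Finset ℝ, ↑s ⊆ T ∧ 5 ≤ s.card)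
    (μ ν : Measure ℝ)
    (hμ : ∀ c d : ℝ, c ≤ d →
      μ (Set.Ioc c d) = ENNReal.ofReal (tsSigma (tsKappa T) d - tsSigma (tsKappa T) c))
    (hν : ∀ c d : ℝ, c ≤ d → ν (Set.Ico c d) = ENNReal.ofReal (tsRho T d - tsRho T c))
    (p r q : ℝ → ℝ)
    (hr : LocallyIntegrable r μ) (hrpos : ∀ᵐ t ∂μ, 0 < r t)
    (hq : LocallyIntegrable q μ)
    (hpne : ∀ᵐ t ∂ν, p t ≠ 0) (hp : LocallyIntegrable (fun t => 1 / p t) ν)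
    (hlpa : LimitPointLeft T μ p r q) (hlpb : LimitPointRight T μ p r q) :
    ∃ S : Lp ℂ 2 (wM T μ r) →ₗ.[ℂ] Lp ℂ 2 (wM T μ r),
      Dense (S.domain : Set (Lp ℂ 2 (wM T μ r))) ∧ IsSelfAdjoint S ∧
      ∀ F G : Lp ℂ 2 (wM T μ r), (F, G) ∈ S.graph ↔
        ∃ u u1 h : ℝ → ℂ, MemD2 T μ p r q u u1 h ∧
          (∀ᵐ t ∂(wM T μ r), F t = u t) ∧
          (∀ᵐ t ∂(wM T μ r), G t = ellApply r q h u t) := by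
  have := (show IsSigmaMeasure (tsKappa T) μ from hμ).isLocallyFiniteMeasure
  have hT : IsUnboundedTimeScale T :=
    ⟨hcl, not_bddAbove_of_limitPointRight hr hlpb, not_bddBelow_of_limitPointLeft hr hlpa⟩
  replace hμ : IsSigmaMeasure T μ := by rwa [hT.tsKappa_eq] at hμ
  obtain rfl : ν = Measure.map (tsCeil T) volume := IsRhoMeasure.eq_map_tsCeil hν hT
  let L : SturmLiouville :=
    { w := fun t => 1 / p (tsCeil T t), r, q, μ
      locallyIntegrable_w := hT.locallyIntegrable_comp_tsCeil hp
      locallyIntegrable_r := hr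
      locallyIntegrable_q := hq
      pos_r := hrpos
      isLocallyFiniteMeasure_μ := this }
  have hw (t) : (extK T (cR p) t)⁻¹ = L.w t := by simp [L, hT.extK_eq, cR]
  have hwne : ∀ᵐ t, L.w t ≠ 0 :=
    (ae_of_ae_map hT.monotone_tsCeil.measurable.aemeasurable hpne).mono fun t => one_div_ne_zero
  rw [show wM T μ r = L.ρ from hT.wM_eq hμ r]
  obtain ⟨S, hdense, hself, hgraph⟩ := L.exists_isSelfAdjoint
    (SturmLiouville.locallyDefinite hT hμ (f := fun t => 1 / p t) (fun _ => rfl) hwne)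
    (SturmLiouville.limitPointOn_Ioi hw hlpb) (SturmLiouville.limitPointOn_Iic hw hlpa)
  exact ⟨S, hdense, hself, fun F G =>
    (hgraph F G).trans (SturmLiouville.exists_solves_iff_exists_memD2 hw)⟩
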